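/- arXiv:2410.03991 — 9 statements merged into one kernel-verified Lean document; each statement's English description precedes it below -/
import Mathlib

section
/- Let s be a fixed positive integer and ε be a fixed real number with 0 < ε. There exists p₀ (depending only on s and ε) such that for every prime p > p₀ the following holds: for every subset M of the nonzero residues modulo p with |M| = ⌊p^{14/29}⌋, and with H = ⌊p^{14/29+ε}⌋, every integer λ can be represented in the form m₁·x₁^{-s} + m₂·x₂^{-s} + m₃·x₃^{-s} ≡ λ (mod p) with m₁, m₂, m₃ ∈ M and integers 1 ≤ x₁, x₂, x₃ ≤ H. -/
/-!
Write `θ = 14/29`, `ψ` for the standard additive character of `ZMod p`, and assume, as one may, that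
`ε` is small. The proof is a ternary circle method over `ZMod p` in which the three variables play
different roles. With `A` a set of about `p ^ θ` primes, `B` a set of about `p ^ (θ/2)` smaller
primes and `L ≈ p ^ (θ/2)`, take `x₁ = n + q y` with `n ∈ A`, `q ∈ B`, `1 ≤ y ≤ L`, and `x₂, x₃ ∈ A`.
Let `S(a)` and `P(a)` be the sums of `ψ (a m x⁻ˢ)` over `m ∈ M` and over the first, respectively the
second, kind of `x`. If some residue is not represented, the contribution `S(0) P(0)²` of `a = 0`
is at most `max_{a ≠ 0} |S(a)| · ∑ₐ |P(a)|²` (`ternary_of_bound`).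

* `∑ₐ |P(a)|²` is `p` times the number of solutions of `m x⁻ˢ = m' x'⁻ˢ`. As `A` consists of primes
  below `√p`, a ratio `x / x' ≠ 1` determines `x` and `x'`, and there are at most `s` ratios for each
  `(m, m')`; so this number is `O(|M| |A|)` (`card_collisions_le`).
* For `S(a)`, Burgess's shift `a m (n + q y)⁻ˢ = b (u + y)⁻ˢ`, `b = a m q⁻ˢ`, `u = n / q`, has
  pairwise distinct parameters `(b, u)`. Hölder's inequality with exponent `6`, completion of the sum
  over `b`, and orthogonality reduce the bound to counting the solutions of
  `∑_{i<3} (u + yᵢ)⁻ˢ = ∑_{i<3} (u + yᵢ')⁻ˢ`. Unless `y'` permutes `y`, the difference of the two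
  sides is a rational function of `u` with a genuine pole, so it has `O(s)` zeros (`card_poles_le`).
  Since there are at least `L³` values of `u`, this gives a saving of `(p / (|M| L³)) ^ (1/6)`
  (`sum_structured_le`).

Altogether a representation exists once `C_s p⁷ < |M|⁷ L³ |A|⁶` (`ternary_core`). The exponents
`7 θ + 3 θ / 2 + 6 θ = 7` match exactly, and the extra `p ^ ε` absorbs the constants and the density
of the primes, for which a Chebyshev lower bound suffices.
-/

open Finset Filter

namespace ThreeSummands

variable {p : ℕ} [Fact p.Prime]

/-! ### Character sums over `ZMod p` -/

lemma sum_char_mul (c : ZMod p) :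
    ∑ a : ZMod p, (ZMod.stdAddChar (a * c) : ℂ) = if c = 0 then (p : ℂ) else 0 := by
  rw [AddChar.sum_mulShift c (ZMod.isPrimitive_stdAddChar p)]
  split_ifs <;> simp [ZMod.card]

/-- Parseval: the second moment of an exponential sum counts the coincidences of its phases. -/
lemma second_moment {ι : Type*} (T : Finset ι) (h : ι → ZMod p) :
    ∑ a : ZMod p, ‖∑ t ∈ T, (ZMod.stdAddChar (a * h t) : ℂ)‖ ^ 2
      = p * #{x ∈ T ×ˢ T | h x.1 = h x.2} := by
  have key : ∀ a : ZMod p, ((‖∑ t ∈ T, (ZMod.stdAddChar (a * h t) : ℂ)‖ ^ 2 : ℝ) : ℂ)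
      = ∑ x ∈ T ×ˢ T, (ZMod.stdAddChar (a * (h x.1 - h x.2)) : ℂ) := by
    intro a
    push_cast
    rw [← Complex.mul_conj', map_sum, sum_mul_sum, ← sum_product']
    refine sum_congr rfl fun x _ => ?_
    rw [← AddChar.map_neg_eq_conj, ← AddChar.map_add_eq_mul]
    congr 1; ring
  have : ((∑ a : ZMod p, ‖∑ t ∈ T, (ZMod.stdAddChar (a * h t) : ℂ)‖ ^ 2 : ℝ) : ℂ)
      = ((p * #{x ∈ T ×ˢ T | h x.1 = h x.2} : ℝ) : ℂ) := by
    rw [Complex.ofReal_sum, sum_congr rfl fun a _ => key a, sum_comm]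
    simp_rw [sum_char_mul, sub_eq_zero]
    rw [← sum_filter, sum_const, nsmul_eq_mul]
    push_cast; ring
  exact_mod_cast this

/-- The ternary circle method: `f i + g j + g k` takes every value as soon as the main term at
frequency `0` exceeds the supremum bound for the `f`-sum times the second moment of the `g`-sum. -/
lemma ternary_of_bound {ι κ : Type*} (I : Finset ι) (J : Finset κ) (f : ι → ZMod p)
    (g : κ → ZMod p) (B : ℝ)
    (hB : ∀ a : ZMod p, a ≠ 0 → ‖∑ i ∈ I, (ZMod.stdAddChar (a * f i) : ℂ)‖ ≤ B)
    (hlt : B * (p * #{x ∈ J ×ˢ J | g x.1 = g x.2}) < #I * (#J : ℝ) ^ 2) (lam : ZMod p) :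
    ∃ i ∈ I, ∃ j ∈ J, ∃ k ∈ J, f i + g j + g k = lam := by
  by_contra! hno
  set S : ZMod p → ℂ := fun a => ∑ i ∈ I, (ZMod.stdAddChar (a * f i) : ℂ) with hS
  set P : ZMod p → ℂ := fun a => ∑ j ∈ J, (ZMod.stdAddChar (a * g j) : ℂ) with hP
  have hzero : ∑ a : ZMod p, S a * P a ^ 2 * ZMod.stdAddChar (a * (-lam)) = 0 := by
    have : ∀ a : ZMod p, S a * P a ^ 2 * ZMod.stdAddChar (a * (-lam))
        = ∑ x ∈ I ×ˢ (J ×ˢ J),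
          (ZMod.stdAddChar (a * (f x.1 + g x.2.1 + g x.2.2 - lam)) : ℂ) := by
      intro a
      rw [hS, hP, pow_two, sum_mul_sum, ← sum_product', sum_mul_sum, ← sum_product', sum_mul]
      refine sum_congr rfl fun x _ => ?_
      rw [← AddChar.map_add_eq_mul, ← AddChar.map_add_eq_mul, ← AddChar.map_add_eq_mul]
      congr 1; ring
    rw [sum_congr rfl fun a _ => this a, sum_comm]
    refine sum_eq_zero fun x hx => ?_
    simp only [mem_product] at hx
    rw [sum_char_mul, if_neg (sub_ne_zero.2 (hno _ hx.1 _ hx.2.1 _ hx.2.2))]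
  rw [← add_sum_erase _ _ (mem_univ 0)] at hzero
  have h0 : S 0 * P 0 ^ 2 * ZMod.stdAddChar ((0 : ZMod p) * (-lam)) = #I * (#J : ℂ) ^ 2 := by
    simp [hS, hP]
  rw [h0, add_eq_zero_iff_eq_neg] at hzero
  have hn : ‖(#I * (#J : ℂ) ^ 2)‖ = #I * (#J : ℝ) ^ 2 := by simp
  rw [← hn, hzero, norm_neg] at hlt
  refine absurd hlt (not_lt.2 ?_)
  rw [← second_moment, mul_sum]
  have hB0 : ∀ a ∈ (univ : Finset (ZMod p)).erase 0,
      ‖S a * P a ^ 2 * ZMod.stdAddChar (a * (-lam))‖ ≤ B * ‖P a‖ ^ 2 := by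
    intro a ha
    rw [norm_mul, norm_mul, norm_pow, AddChar.norm_apply, mul_one]
    exact mul_le_mul_of_nonneg_right (hB a (ne_of_mem_erase ha)) (by positivity)
  refine (norm_sum_le_of_le _ hB0).trans ?_
  refine sum_le_sum_of_subset_of_nonneg (subset_univ _) fun a _ _ => ?_
  refine mul_nonneg ((norm_nonneg _).trans (hB 1 one_ne_zero)) (by positivity)

/-! ### Counting solutions of the shifted equation -/

/-- A combination of the functions `u ↦ (u + v)⁻ˢ`, `v ∈ D`, with a nonzero coefficient at some `v₀`
has few zeros away from its poles: clearing denominators gives a polynomial of degree at most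
`|D| s`, which is nonzero because it does not vanish at `-v₀`. -/
lemma card_poles_le {s : ℕ} (hs : 0 < s) (D : Finset (ZMod p)) (c : ZMod p → ZMod p)
    {v₀ : ZMod p} (hv₀ : v₀ ∈ D) (hc : c v₀ ≠ 0) (U : Finset (ZMod p))
    (hU : ∀ u ∈ U, ∀ v ∈ D, u + v ≠ 0)
    (hsol : ∀ u ∈ U, ∑ v ∈ D, c v * ((u + v)⁻¹) ^ s = 0) :
    #U ≤ #D * s := by
  classical
  open Polynomial in
  let F : (ZMod p)[X] := ∑ v ∈ D, C (c v) * ∏ w ∈ D.erase v, (X + C w) ^ s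
  have hF0 : F.eval (-v₀) ≠ 0 := by
    simp only [F, Polynomial.eval_finsetSum]
    rw [sum_eq_single v₀]
    · simp only [Polynomial.eval_mul, Polynomial.eval_C, Polynomial.eval_prod,
        Polynomial.eval_pow, Polynomial.eval_add, Polynomial.eval_X]
      refine mul_ne_zero hc (prod_ne_zero_iff.2 fun w hw => pow_ne_zero _ ?_)
      rw [neg_add_eq_sub]
      exact sub_ne_zero.2 (ne_of_mem_erase hw)
    · intro v _ hne
      simp only [Polynomial.eval_mul, Polynomial.eval_prod, Polynomial.eval_pow,
        Polynomial.eval_add, Polynomial.eval_X, Polynomial.eval_C]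
      rw [prod_eq_zero (mem_erase.2 ⟨hne.symm, hv₀⟩) (by simp [hs.ne']), mul_zero]
    · exact fun h => absurd hv₀ h
  have hFne : F ≠ 0 := by
    intro h; rw [h] at hF0; simp at hF0
  have hdeg : F.natDegree ≤ #D * s := by
    refine Polynomial.natDegree_sum_le_of_forall_le _ _ fun v _ => ?_
    refine (Polynomial.natDegree_C_mul_le _ _).trans ?_
    refine (Polynomial.natDegree_prod_le _ _).trans ?_
    calc ∑ w ∈ D.erase v, ((Polynomial.X + Polynomial.C w : Polynomial (ZMod p)) ^ s).natDegree
        ≤ ∑ w ∈ D.erase v, s := by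
          refine sum_le_sum fun w _ => ?_
          simp [Polynomial.natDegree_pow]
      _ ≤ #D * s := by
          rw [sum_const, smul_eq_mul]
          exact Nat.mul_le_mul_right _ (card_le_card (erase_subset _ _))
  refine le_trans ?_ hdeg
  refine Polynomial.card_le_degree_of_subset_roots (p := F) ?_
  intro u hu
  rw [Polynomial.mem_roots hFne, Polynomial.IsRoot.def]
  have hev : F.eval u = (∏ w ∈ D, (u + w) ^ s) * ∑ v ∈ D, c v * ((u + v)⁻¹) ^ s := by
    simp only [F, Polynomial.eval_finsetSum, Polynomial.eval_mul, Polynomial.eval_prod,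
        Polynomial.eval_pow, Polynomial.eval_add, Polynomial.eval_X, Polynomial.eval_C, mul_sum]
    refine sum_congr rfl fun v hv => ?_
    rw [← mul_prod_erase D _ hv]
    have : (u + v) ^ s * (u + v)⁻¹ ^ s = 1 := by
      rw [← mul_pow, mul_inv_cancel₀ (hU u hu v hv), one_pow]
    linear_combination (-(c v * ∏ w ∈ D.erase v, (u + w) ^ s)) * this
  rw [hev, hsol u hu, mul_zero]

/-- Pairs of triples from `Y` with the same multiset of values: each is determined by one triple and
a permutation of the three indices. -/
lemma card_same_fibers_le (Y : Finset (ZMod p)) :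
    #{x ∈ Fintype.piFinset (fun _ : Fin 3 => Y) ×ˢ Fintype.piFinset (fun _ : Fin 3 => Y) |
      ∀ v, #{i | x.1 i = v} = #{i | x.2 i = v}} ≤ 6 * #Y ^ 3 := by
  classical
  have hsub : {x ∈ Fintype.piFinset (fun _ : Fin 3 => Y) ×ˢ Fintype.piFinset (fun _ : Fin 3 => Y) |
      ∀ v, #{i | x.1 i = v} = #{i | x.2 i = v}} ⊆
      ((univ : Finset (Equiv.Perm (Fin 3))) ×ˢ Fintype.piFinset (fun _ : Fin 3 => Y)).image
        (fun z => (z.2 ∘ z.1, z.2)) := by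
    intro x hx
    simp only [mem_filter, mem_product] at hx
    obtain ⟨⟨-, h2⟩, h⟩ := hx
    let e : ∀ v, {i // x.1 i = v} ≃ {i // x.2 i = v} := fun v =>
      Fintype.equivOfCardEq (by rw [Fintype.card_subtype, Fintype.card_subtype]; exact h v)
    refine mem_image.2 ⟨(Equiv.ofFiberEquiv e, x.2), by simpa using h2, ?_⟩
    refine Prod.ext ?_ rfl
    funext i
    exact Equiv.ofFiberEquiv_map e i
  refine (card_le_card hsub).trans (card_image_le.trans ?_)
  rw [card_product, Fintype.card_piFinset]
  simp [Fintype.card_perm, Nat.factorial]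

/-- The sixth-order additive energy of `{(u + y)⁻ˢ : y ∈ Y}`, summed over the shifts `u ∈ U`: the
pairs of triples that are permutations of each other are solutions for every `u`, the other ones for
at most `6 s` values of `u`. -/
lemma sum_energy_le {s : ℕ} (hs : 0 < s) (hp : 3 < p) (U Y : Finset (ZMod p))
    (hUY : ∀ u ∈ U, ∀ y ∈ Y, u + y ≠ 0) :
    ∑ u ∈ U, #{x ∈ Fintype.piFinset (fun _ : Fin 3 => Y) ×ˢ Fintype.piFinset (fun _ : Fin 3 => Y) |
      ∑ i, ((u + x.1 i)⁻¹) ^ s = ∑ i, ((u + x.2 i)⁻¹) ^ s}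
      ≤ 6 * #Y ^ 3 * #U + 6 * s * #Y ^ 6 := by
  classical
  set T := Fintype.piFinset (fun _ : Fin 3 => Y) with hT
  have hTcard : #T = #Y ^ 3 := by rw [hT, Fintype.card_piFinset]; simp
  have hbound : ∀ x ∈ T ×ˢ T,
      #{u ∈ U | ∑ i, ((u + x.1 i)⁻¹) ^ s = ∑ i, ((u + x.2 i)⁻¹) ^ s}
        ≤ (if ∀ v, #{i | x.1 i = v} = #{i | x.2 i = v} then #U else 0) + 6 * s := by
    intro x hx
    rw [mem_product, hT, Fintype.mem_piFinset, Fintype.mem_piFinset] at hx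
    split_ifs with h
    · exact (card_le_card (filter_subset _ _)).trans (Nat.le_add_right _ _)
    · -- Group the terms by value: the coefficient at `v₀` is nonzero mod `p`, being a difference of
      -- two distinct numbers in `{0, …, 3}` while `3 < p`.
      push Not at h
      obtain ⟨v₀, hv₀⟩ := h
      set D : Finset (ZMod p) := univ.image x.1 ∪ univ.image x.2 with hD
      have hDcard : #D ≤ 6 := by
        refine (card_union_le _ _).trans ?_
        have h1 : #(univ.image x.1) ≤ 3 := card_image_le.trans (by simp)
        have h2 : #(univ.image x.2) ≤ 3 := card_image_le.trans (by simp)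
        omega
      have hDY : ∀ v ∈ D, v ∈ Y := by
        intro v hv
        rw [hD, mem_union, mem_image, mem_image] at hv
        rcases hv with ⟨i, -, rfl⟩ | ⟨i, -, rfl⟩
        exacts [hx.1 i, hx.2 i]
      have hv₀D : v₀ ∈ D := by
        by_contra hn
        rw [hD, mem_union, mem_image, mem_image, not_or] at hn
        push Not at hn
        apply hv₀
        rw [filter_eq_empty_iff.2 fun i _ => hn.1 i (mem_univ _),
          filter_eq_empty_iff.2 fun i _ => hn.2 i (mem_univ _)]
      have hc : ((#{i | x.1 i = v₀} : ZMod p) - (#{i | x.2 i = v₀} : ZMod p)) ≠ 0 := by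
        rw [sub_ne_zero]
        intro heq
        apply hv₀
        rw [ZMod.natCast_eq_natCast_iff] at heq
        have hle : ∀ t : Fin 3 → ZMod p, #{i | t i = v₀} < p := fun t =>
          ((card_le_univ _).trans (by simp)).trans_lt hp
        exact Nat.ModEq.eq_of_lt_of_lt heq (hle _) (hle _)
      have hfib : ∀ (t : Fin 3 → ZMod p) (u : ZMod p), (∀ i, t i ∈ D) →
          ∑ i, ((u + t i)⁻¹) ^ s = ∑ v ∈ D, (#{i | t i = v} : ZMod p) * ((u + v)⁻¹) ^ s := by
        intro t u ht
        rw [← sum_fiberwise_of_maps_to (s := univ) (t := D) (g := t) (fun i _ => ht i)]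
        refine sum_congr rfl fun v _ => ?_
        rw [sum_congr rfl (g := fun _ => ((u + v)⁻¹) ^ s)
          (fun i hi => by rw [(mem_filter.1 hi).2]), sum_const, nsmul_eq_mul]
      have := card_poles_le hs D
        (fun v => (#{i | x.1 i = v} : ZMod p) - (#{i | x.2 i = v} : ZMod p)) hv₀D hc
        {u ∈ U | ∑ i, ((u + x.1 i)⁻¹) ^ s = ∑ i, ((u + x.2 i)⁻¹) ^ s}
        (fun u hu v hv => hUY u (mem_filter.1 hu).1 v (hDY v hv))
        (fun u hu => by
          have h := (mem_filter.1 hu).2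
          rw [hfib x.1 u fun i => mem_union_left _ (mem_image_of_mem _ (mem_univ i)),
            hfib x.2 u fun i => mem_union_right _ (mem_image_of_mem _ (mem_univ i))] at h
          simp_rw [sub_mul, sum_sub_distrib]
          rw [h, sub_self])
      rw [zero_add]
      exact this.trans (Nat.mul_le_mul_right _ hDcard)
  calc ∑ u ∈ U, #{x ∈ T ×ˢ T | ∑ i, ((u + x.1 i)⁻¹) ^ s = ∑ i, ((u + x.2 i)⁻¹) ^ s}
      = ∑ x ∈ T ×ˢ T, #{u ∈ U | ∑ i, ((u + x.1 i)⁻¹) ^ s = ∑ i, ((u + x.2 i)⁻¹) ^ s} := by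
        simp_rw [card_filter]
        rw [sum_comm]
    _ ≤ ∑ x ∈ T ×ˢ T,
        ((if ∀ v, #{i | x.1 i = v} = #{i | x.2 i = v} then #U else 0) + 6 * s) :=
        sum_le_sum hbound
    _ = #{x ∈ T ×ˢ T | ∀ v, #{i | x.1 i = v} = #{i | x.2 i = v}} * #U
          + (#Y ^ 3 * #Y ^ 3) * (6 * s) := by
        rw [sum_add_distrib, ← sum_filter, sum_const, sum_const, card_product, hTcard,
          smul_eq_mul, smul_eq_mul]
    _ ≤ 6 * #Y ^ 3 * #U + (#Y ^ 3 * #Y ^ 3) * (6 * s) := by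
        gcongr
        exact card_same_fibers_le Y
    _ = _ := by ring

/-- Hölder's inequality with exponent `6`, followed by extension of the range of the coefficient
`ω.1` to all of `ZMod p`, bounds the bilinear sum by the additive energy. -/
lemma sum_norm_pow_six_le {s : ℕ} (hs : 0 < s) (hp : 3 < p) (Ω : Finset (ZMod p × ZMod p))
    (U Y : Finset (ZMod p)) (hΩ : ∀ ω ∈ Ω, ω.2 ∈ U)
    (hUY : ∀ u ∈ U, ∀ y ∈ Y, u + y ≠ 0) :
    (∑ ω ∈ Ω, ‖∑ y ∈ Y, (ZMod.stdAddChar (ω.1 * ((ω.2 + y)⁻¹) ^ s) : ℂ)‖) ^ 6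
      ≤ (#Ω : ℝ) ^ 5 * (p * (6 * #Y ^ 3 * #U + 6 * s * #Y ^ 6)) := by
  classical
  set G : ZMod p × ZMod p → ℝ :=
    fun ω => ‖∑ y ∈ Y, (ZMod.stdAddChar (ω.1 * ((ω.2 + y)⁻¹) ^ s) : ℂ)‖ with hG
  have hhol : (∑ ω ∈ Ω, G ω) ^ 6 ≤ (#Ω : ℝ) ^ 5 * ∑ ω ∈ Ω, G ω ^ 6 := by
    rcases Ω.eq_empty_or_nonempty with rfl | hne
    · simp
    have := pow_sum_div_card_le_sum_pow (s := Ω) (f := G) (fun _ _ => norm_nonneg _) 5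
    rwa [div_le_iff₀' (by have := hne.card_pos; positivity)] at this
  refine hhol.trans (mul_le_mul_of_nonneg_left ?_ (by positivity))
  have hsix : ∀ b u : ZMod p, G (b, u) ^ 6
      = ‖∑ t ∈ Fintype.piFinset (fun _ : Fin 3 => Y),
          (ZMod.stdAddChar (b * ∑ i, ((u + t i)⁻¹) ^ s) : ℂ)‖ ^ 2 := by
    intro b u
    rw [hG, show (6 : ℕ) = 3 * 2 from rfl, pow_mul, ← norm_pow]
    congr 2
    have := prod_univ_sum (fun _ : Fin 3 => Y)
      (fun _ y => (ZMod.stdAddChar (b * ((u + y)⁻¹) ^ s) : ℂ))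
    rw [prod_const, card_univ, Fintype.card_fin] at this
    rw [this]
    refine sum_congr rfl fun t _ => ?_
    rw [Fin.sum_univ_three, Fin.prod_univ_three, mul_add, mul_add, AddChar.map_add_eq_mul,
      AddChar.map_add_eq_mul]
  calc ∑ ω ∈ Ω, G ω ^ 6
      ≤ ∑ ω ∈ (univ : Finset (ZMod p)) ×ˢ U, G ω ^ 6 :=
        sum_le_sum_of_subset_of_nonneg
          (fun ω hω => mem_product.2 ⟨mem_univ _, hΩ ω hω⟩) (fun _ _ _ => by positivity)
    _ = ∑ u ∈ U, ∑ b : ZMod p, G (b, u) ^ 6 := sum_product_right _ _ _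
    _ = p * ((∑ u ∈ U, #{x ∈ Fintype.piFinset (fun _ : Fin 3 => Y) ×ˢ
          Fintype.piFinset (fun _ : Fin 3 => Y) |
          ∑ i, ((u + x.1 i)⁻¹) ^ s = ∑ i, ((u + x.2 i)⁻¹) ^ s} : ℕ) : ℝ) := by
        rw [Nat.cast_sum, mul_sum]
        refine sum_congr rfl fun u _ => ?_
        rw [sum_congr rfl fun b _ => hsix b u]
        exact second_moment _ (fun t : Fin 3 → ZMod p => ∑ i, ((u + t i)⁻¹) ^ s)
    _ ≤ _ := by
        refine mul_le_mul_of_nonneg_left ?_ (by positivity)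
        exact_mod_cast sum_energy_le hs hp U Y hUY

/-! ### The structured sum and the prime sum -/

lemma natCast_ne_zero_of_lt {n : ℕ} (h0 : 0 < n) (hn : n < p) : (n : ZMod p) ≠ 0 := by
  rw [Ne, ZMod.natCast_eq_zero_iff]
  exact fun h => absurd (Nat.le_of_dvd h0 h) (not_le.2 hn)

/-- Below `√p`, the congruence `a / b ≡ c / d` is an identity of fractions, and fractions with
distinct prime numerator and denominator are reduced. -/
lemma prime_ratio_inj {N a b c d : ℕ} (hN : N * N < p) (ha : a.Prime) (hb : b.Prime)
    (hc : c.Prime) (haN : a ≤ N) (hbN : b ≤ N) (hcN : c ≤ N) (hd : d.Prime) (hdN : d ≤ N)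
    (hab : a ≠ b) (h : (a : ZMod p) * (b : ZMod p)⁻¹ = c * (d : ZMod p)⁻¹) : a = c ∧ b = d := by
  have hlt : ∀ n : ℕ, n ≤ N → n < p := fun n hn => by nlinarith
  have hb0 := natCast_ne_zero_of_lt hb.pos (hlt b hbN)
  have hd0 := natCast_ne_zero_of_lt hd.pos (hlt d hdN)
  have h1 : ((a * d : ℕ) : ZMod p) = ((c * b : ℕ) : ZMod p) := by
    push_cast
    field_simp at h
    linear_combination h
  rw [ZMod.natCast_eq_natCast_iff] at h1
  have h2 : a * d = c * b := h1.eq_of_lt_of_lt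
    ((Nat.mul_le_mul haN hdN).trans_lt hN) ((Nat.mul_le_mul hcN hbN).trans_lt hN)
  have hac : a = c := by
    rcases (ha.dvd_mul).1 (Dvd.intro _ h2) with h | h
    · exact (Nat.prime_dvd_prime_iff_eq ha hc).1 h
    · exact absurd ((Nat.prime_dvd_prime_iff_eq ha hb).1 h) hab
  subst hac
  exact ⟨rfl, (Nat.eq_of_mul_eq_mul_left ha.pos h2).symm⟩

/-- The solutions of `m x⁻ˢ = m' x'⁻ˢ` with `m, m' ∈ M` and primes `x, x' ∈ A`: at most `|M| |A|`
with `x = x'`, and otherwise `x / x'` is one of at most `s` roots of `z ^ s = m / m'` and determines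
`(x, x')`. -/
lemma card_collisions_le {s : ℕ} (hs : 0 < s) (M : Finset (ZMod p)) (hM : ∀ m ∈ M, m ≠ 0)
    (A : Finset ℕ) {N : ℕ} (hA : ∀ n ∈ A, n.Prime ∧ n ≤ N) (hN : N * N < p) (hMA : #M ≤ #A) :
    #{x ∈ (M ×ˢ A) ×ˢ (M ×ˢ A) |
      x.1.1 * ((x.1.2 : ZMod p)⁻¹) ^ s = x.2.1 * ((x.2.2 : ZMod p)⁻¹) ^ s}
      ≤ (1 + s) * (#M * #A) := by
  classical
  set E := {x ∈ (M ×ˢ A) ×ˢ (M ×ˢ A) |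
      x.1.1 * ((x.1.2 : ZMod p)⁻¹) ^ s = x.2.1 * ((x.2.2 : ZMod p)⁻¹) ^ s} with hE
  have hcast : ∀ n ∈ A, (n : ZMod p) ≠ 0 := fun n hn =>
    natCast_ne_zero_of_lt (hA n hn).1.pos (by nlinarith [(hA n hn).2])
  have hEmem : ∀ x, x ∈ E ↔ ((x.1.1 ∈ M ∧ x.1.2 ∈ A) ∧ (x.2.1 ∈ M ∧ x.2.2 ∈ A)) ∧
      x.1.1 * ((x.1.2 : ZMod p)⁻¹) ^ s = x.2.1 * ((x.2.2 : ZMod p)⁻¹) ^ s := by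
    intro x; rw [hE]; simp only [mem_filter, mem_product]
  rw [← card_filter_add_card_filter_not (s := E) (fun x => x.1.2 = x.2.2)]
  have hdiag : #{x ∈ E | x.1.2 = x.2.2} ≤ #M * #A := by
    rw [← card_product]
    refine card_le_card_of_injOn (fun x => x.1) ?_ ?_
    · intro x hx
      have := ((hEmem x).1 (mem_filter.1 hx).1).1.1
      exact mem_product.2 this
    · intro x hx y hy hxy
      have hx := mem_filter.1 hx
      have hy := mem_filter.1 hy
      have hval : ∀ z ∈ E, z.1.2 = z.2.2 → z.2 = z.1 := by
        intro z hz hz'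
        obtain ⟨⟨⟨-, h2⟩, -⟩, h⟩ := (hEmem z).1 hz
        rw [← hz'] at h
        exact Prod.ext (mul_right_cancel₀ (pow_ne_zero _ (inv_ne_zero (hcast _ h2))) h).symm
          hz'.symm
      refine Prod.ext hxy ?_
      rw [hval x hx.1 hx.2, hval y hy.1 hy.2]
      exact hxy
  have hoff : #{x ∈ E | ¬ x.1.2 = x.2.2} ≤ s * (#M * #M) := by
    rw [← card_product]
    refine card_le_mul_card_image_of_maps_to (f := fun x => (x.1.1, x.2.1)) ?_ s ?_
    · intro x hx
      have := ((hEmem x).1 (mem_filter.1 hx).1).1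
      exact mem_product.2 ⟨this.1.1, this.2.1⟩
    · rintro ⟨m, m'⟩ hmm
      refine le_trans ?_ ((Multiset.toFinset_card_le _).trans
        (Polynomial.card_nthRoots s (m * m'⁻¹)))
      refine card_le_card_of_injOn
        (fun x => (x.1.2 : ZMod p) * (x.2.2 : ZMod p)⁻¹) ?_ ?_
      · intro x hx
        obtain ⟨hx, hx2⟩ := mem_filter.1 hx
        obtain ⟨⟨⟨h1, h2⟩, h3, h4⟩, h⟩ := (hEmem x).1 (mem_filter.1 hx).1
        simp only [Prod.mk.injEq] at hx2
        rw [hx2.1, hx2.2] at h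
        rw [hx2.2] at h3
        have h3' := hM _ h3
        have h2' := hcast _ h2
        have h4' := hcast _ h4
        rw [mem_coe, Multiset.mem_toFinset, Polynomial.mem_nthRoots hs, mul_pow, inv_pow]
        rw [inv_pow, inv_pow] at h
        field_simp at h ⊢
        linear_combination -h
      · intro x hx y hy hxy
        obtain ⟨hx, hx2⟩ := mem_filter.1 hx
        obtain ⟨hx, hxne⟩ := mem_filter.1 hx
        obtain ⟨⟨⟨-, h2⟩, -, h4⟩, -⟩ := (hEmem x).1 hx
        obtain ⟨hy, hy2⟩ := mem_filter.1 hy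
        obtain ⟨⟨⟨-, k2⟩, -, k4⟩, -⟩ := (hEmem y).1 (mem_filter.1 hy).1
        simp only [Prod.mk.injEq] at hx2 hy2
        obtain ⟨e1, e2⟩ := prime_ratio_inj hN (hA _ h2).1 (hA _ h4).1 (hA _ k2).1 (hA _ h2).2
          (hA _ h4).2 (hA _ k2).2 (hA _ k4).1 (hA _ k4).2 hxne hxy
        exact Prod.ext (Prod.ext (hx2.1.trans hy2.1.symm) e1) (Prod.ext (hx2.2.trans hy2.2.symm) e2)
  have : #M * #M ≤ #M * #A := Nat.mul_le_mul_left _ hMA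
  nlinarith

/-- The bound for the exponential sum over `m (n + q y)⁻ˢ` at a nonzero frequency `a`, through the
change of variables `(m, n, q) ↦ (a m q⁻ˢ, n / q)`, which is injective because `n` and `q` run over
disjoint sets of primes below `√p`. -/
lemma sum_structured_le {s : ℕ} (hs : 0 < s) (hp : 3 < p) (M : Finset (ZMod p))
    (A B : Finset ℕ) {N Q L : ℕ}
    (hA : ∀ n ∈ A, n.Prime ∧ n ≤ N) (hB : ∀ q ∈ B, q.Prime ∧ q ≤ Q) (hAB : Disjoint A B)
    (hQN : Q ≤ N) (hN : N * N < p) (hsz : N + Q * L < p) (hLp : L < p)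
    (hL : L ^ 3 ≤ #A * #B) (a : ZMod p) (ha : a ≠ 0) :
    ‖∑ i ∈ (M ×ˢ A ×ˢ B) ×ˢ Icc 1 L, (ZMod.stdAddChar
      (a * (i.1.1 * (((i.1.2.1 + i.1.2.2 * i.2 : ℕ) : ZMod p)⁻¹) ^ s)) : ℂ)‖ ^ 6
    ≤ ((#M : ℝ) * #A * #B) ^ 5 * (p * (6 * (1 + s) * L ^ 3 * (#A * #B))) := by
  classical
  have hne : ∀ n ∈ A, ∀ q ∈ B, n ≠ q := fun n hn q hq e =>
    Finset.disjoint_left.1 hAB hn (e ▸ hq)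
  have hBN : ∀ q ∈ B, q ≤ N := fun q hq => (hB q hq).2.trans hQN
  have hltp : ∀ n ≤ N, n < p := fun n hn => by nlinarith
  have hB0 : ∀ q ∈ B, (q : ZMod p) ≠ 0 := fun q hq =>
    natCast_ne_zero_of_lt (hB q hq).1.pos (hltp _ (hBN q hq))
  set φ : ZMod p × ℕ × ℕ → ZMod p × ZMod p :=
    fun z => (a * z.1 * ((z.2.2 : ZMod p)⁻¹) ^ s, (z.2.1 : ZMod p) * (z.2.2 : ZMod p)⁻¹) with hφ
  set Y : Finset (ZMod p) := (Icc 1 L).image (fun y : ℕ => (y : ZMod p)) with hY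
  set U : Finset (ZMod p) :=
    (A ×ˢ B).image (fun z : ℕ × ℕ => (z.1 : ZMod p) * (z.2 : ZMod p)⁻¹) with hU
  set Ω := (M ×ˢ A ×ˢ B).image φ with hΩ
  have hYinj : Set.InjOn (fun y : ℕ => (y : ZMod p)) (Icc 1 L : Finset ℕ) := by
    intro x hx y hy hxy
    simp only [coe_Icc, Set.mem_Icc] at hx hy
    simp only [ZMod.natCast_eq_natCast_iff] at hxy
    exact Nat.ModEq.eq_of_lt_of_lt hxy (by omega) (by omega)
  have hYcard : #Y = L := by rw [hY, card_image_of_injOn hYinj]; simp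
  have hφinj : Set.InjOn φ (M ×ˢ A ×ˢ B : Finset (ZMod p × ℕ × ℕ)) := by
    rintro ⟨m, n, q⟩ hx ⟨m', n', q'⟩ hy hxy
    simp only [mem_coe, mem_product] at hx hy
    simp only [hφ, Prod.mk.injEq] at hxy
    obtain ⟨rfl, rfl⟩ := prime_ratio_inj hN (hA _ hx.2.1).1 (hB _ hx.2.2).1 (hA _ hy.2.1).1
      (hA _ hx.2.1).2 (hBN _ hx.2.2) (hA _ hy.2.1).2 (hB _ hy.2.2).1 (hBN _ hy.2.2)
      (hne _ hx.2.1 _ hx.2.2) hxy.2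
    have := mul_left_cancel₀ ha
      (mul_right_cancel₀ (pow_ne_zero _ (inv_ne_zero (hB0 _ hx.2.2))) hxy.1)
    rw [this]
  have hΩcard : #Ω = #M * #A * #B := by
    rw [hΩ, card_image_of_injOn hφinj, card_product, card_product, mul_assoc]
  have hUcard : #U ≤ #A * #B := card_image_le.trans (card_product _ _).le
  have hΩU : ∀ ω ∈ Ω, ω.2 ∈ U := by
    intro ω hω
    obtain ⟨z, hz, rfl⟩ := mem_image.1 hω
    exact mem_image.2 ⟨z.2, (mem_product.1 hz).2, rfl⟩
  have hshift : ∀ n : ℕ, ∀ q ∈ B, ∀ y : ℕ, (n : ZMod p) * (q : ZMod p)⁻¹ + y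
      = ((n + q * y : ℕ) : ZMod p) * (q : ZMod p)⁻¹ := by
    intro n q hq y
    have := hB0 q hq
    push_cast
    field_simp
  have hUY : ∀ u ∈ U, ∀ y ∈ Y, u + y ≠ 0 := by
    intro u hu y hy
    obtain ⟨⟨n, q⟩, hz, rfl⟩ := mem_image.1 hu
    obtain ⟨y, hyL, rfl⟩ := mem_image.1 hy
    rw [mem_product] at hz
    rw [mem_Icc] at hyL
    rw [hshift n q hz.2 y]
    refine mul_ne_zero (natCast_ne_zero_of_lt ?_ ?_) (inv_ne_zero (hB0 q hz.2))
    · have := (hA n hz.1).1.pos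
      omega
    · have := (hA n hz.1).2
      have := Nat.mul_le_mul (hB q hz.2).2 hyL.2
      simp only at *
      omega
  have hnorm : ‖∑ i ∈ (M ×ˢ A ×ˢ B) ×ˢ Icc 1 L, (ZMod.stdAddChar
      (a * (i.1.1 * (((i.1.2.1 + i.1.2.2 * i.2 : ℕ) : ZMod p)⁻¹) ^ s)) : ℂ)‖
      ≤ ∑ ω ∈ Ω, ‖∑ y ∈ Y, (ZMod.stdAddChar (ω.1 * ((ω.2 + y)⁻¹) ^ s) : ℂ)‖ := by
    rw [hΩ, sum_image hφinj, sum_product]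
    refine (norm_sum_le _ _).trans (le_of_eq (sum_congr rfl fun z hz => ?_))
    congr 1
    rw [hY, sum_image hYinj]
    refine sum_congr rfl fun y hy => ?_
    simp only [mem_product] at hz
    have hq := hB0 _ hz.2.2
    simp only [hφ]
    rw [hshift _ _ hz.2.2, mul_inv, inv_inv, mul_pow, inv_pow (z.2.2 : ZMod p)]
    congr 1
    field_simp
  have hmain := sum_norm_pow_six_le hs hp Ω U Y hΩU hUY
  rw [hΩcard, hYcard] at hmain
  refine (pow_le_pow_left₀ (norm_nonneg _) hnorm 6).trans (hmain.trans ?_)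
  push_cast
  have hU' : (#U : ℝ) ≤ #A * #B := by exact_mod_cast hUcard
  have hL' : (L : ℝ) ^ 3 ≤ #A * #B := by exact_mod_cast hL
  gcongr
  calc (6 * (L : ℝ) ^ 3 * #U + 6 * s * L ^ 6)
      = 6 * (L : ℝ) ^ 3 * #U + 6 * s * L ^ 3 * L ^ 3 := by ring
    _ ≤ 6 * (L : ℝ) ^ 3 * (#A * #B) + 6 * s * L ^ 3 * (#A * #B) := by gcongr
    _ = _ := by ring

/-- The finite form of the theorem, with explicit conditions on the sizes of the sets of primes `A`
and `B` and of the parameters. -/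
theorem ternary_core {s : ℕ} (hs : 0 < s) (hp : 3 < p) (M : Finset (ZMod p))
    (hM : ∀ m ∈ M, m ≠ 0) (A B : Finset ℕ) {N Q L : ℕ}
    (hA : ∀ n ∈ A, n.Prime ∧ n ≤ N) (hB : ∀ q ∈ B, q.Prime ∧ q ≤ Q) (hAB : Disjoint A B)
    (hQN : Q ≤ N) (hN : N * N < p) (hsz : N + Q * L < p) (hLp : L < p)
    (hL : L ^ 3 ≤ #A * #B) (hMA : #M ≤ #A)
    (hmain : 6 * (1 + (s : ℝ)) ^ 7 * p ^ 7 < (#M : ℝ) ^ 7 * L ^ 3 * #A ^ 6) (lam : ZMod p) :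
    ∃ m₁ ∈ M, ∃ m₂ ∈ M, ∃ m₃ ∈ M, ∃ x₁ x₂ x₃ : ℕ,
      (1 ≤ x₁ ∧ x₁ ≤ N + Q * L) ∧ (1 ≤ x₂ ∧ x₂ ≤ N + Q * L) ∧ (1 ≤ x₃ ∧ x₃ ≤ N + Q * L) ∧
      m₁ * ((x₁ : ZMod p)⁻¹) ^ s + m₂ * ((x₂ : ZMod p)⁻¹) ^ s
        + m₃ * ((x₃ : ZMod p)⁻¹) ^ s = lam := by
  set R : ℝ := ((#M : ℝ) * #A * #B) ^ 5 * (p * (6 * (1 + s) * L ^ 3 * (#A * #B))) with hR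
  have hR0 : 0 ≤ R := by positivity
  have hroot : (R ^ ((6 : ℕ) : ℝ)⁻¹) ^ 6 = R := Real.rpow_inv_natCast_pow hR0 (by norm_num)
  have hprod : 0 < (#M : ℝ) ^ 7 * L ^ 3 * #A ^ 6 := lt_of_le_of_lt (by positivity) hmain
  have hM0 : 0 < (#M : ℝ) := by
    rcases (Nat.cast_nonneg (α := ℝ) #M).lt_or_eq with h | h
    · exact h
    · rw [← h] at hprod; simp at hprod
  have hL0 : 0 < (L : ℝ) := by
    rcases (Nat.cast_nonneg (α := ℝ) L).lt_or_eq with h | h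
    · exact h
    · rw [← h] at hprod; simp at hprod
  have hA0 : 0 < (#A : ℝ) := hM0.trans_le (by exact_mod_cast hMA)
  have hB0 : 0 < (#B : ℝ) := by
    have h1 : (L : ℝ) ^ 3 ≤ #A * #B := by exact_mod_cast hL
    have h2 : 0 < (#A : ℝ) * #B := lt_of_lt_of_le (by positivity) h1
    exact (mul_pos_iff_of_pos_left hA0).1 h2
  have hT : ((#{x ∈ (M ×ˢ A) ×ˢ (M ×ˢ A) |
      x.1.1 * ((x.1.2 : ZMod p)⁻¹) ^ s = x.2.1 * ((x.2.2 : ZMod p)⁻¹) ^ s} : ℕ) : ℝ)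
      ≤ (1 + s) * (#M * #A) := by
    exact_mod_cast card_collisions_le hs M hM A hA hN hMA
  obtain ⟨i, hi, j, hj, k, hk, h⟩ := ternary_of_bound ((M ×ˢ A ×ˢ B) ×ˢ Icc 1 L) (M ×ˢ A)
    (fun i => i.1.1 * (((i.1.2.1 + i.1.2.2 * i.2 : ℕ) : ZMod p)⁻¹) ^ s)
    (fun j => j.1 * ((j.2 : ZMod p)⁻¹) ^ s) (R ^ ((6 : ℕ) : ℝ)⁻¹)
    (fun a ha => by
      refine le_of_pow_le_pow_left₀ (n := 6) (by norm_num) (by positivity) ?_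
      rw [hroot]
      exact sum_structured_le hs hp M A B hA hB hAB hQN hN hsz hLp hL a ha)
    (by
      refine lt_of_le_of_lt (mul_le_mul_of_nonneg_left
        (mul_le_mul_of_nonneg_left hT (by positivity)) (by positivity)) ?_
      refine lt_of_pow_lt_pow_left₀ 6 (by positivity) ?_
      rw [mul_pow, hroot, hR]
      simp only [card_product, Nat.card_Icc, add_tsub_cancel_right]
      push_cast
      calc ((#M : ℝ) * #A * #B) ^ 5 * (p * (6 * (1 + s) * L ^ 3 * (#A * #B)))
            * (p * ((1 + s) * (#M * #A))) ^ 6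
          = (#M ^ 11 * #A ^ 12 * #B ^ 6 * L ^ 3) * (6 * (1 + (s : ℝ)) ^ 7 * p ^ 7) := by ring
        _ < (#M ^ 11 * #A ^ 12 * #B ^ 6 * L ^ 3) * ((#M : ℝ) ^ 7 * L ^ 3 * #A ^ 6) := by
          gcongr
        _ = _ := by ring) lam
  simp only [mem_product, mem_Icc] at hi hj hk
  refine ⟨_, hi.1.1, _, hj.1, _, hk.1, _, j.2, k.2, ⟨?_, ?_⟩, ⟨?_, ?_⟩, ⟨?_, ?_⟩, h⟩
  · have := (hA _ hi.1.2.1).1.pos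
    omega
  · exact Nat.add_le_add (hA _ hi.1.2.1).2 (Nat.mul_le_mul (hB _ hi.1.2.2).2 hi.2.2)
  · exact (hA _ hj.2).1.pos
  · exact (hA _ hj.2).2.trans (Nat.le_add_right _ _)
  · exact (hA _ hk.2).1.pos
  · exact (hA _ hk.2).2.trans (Nat.le_add_right _ _)

/-! ### Density of the primes and choice of parameters -/

lemma eventually_rpow_le_primeCounting {η : ℝ} (h0 : 0 ≤ η) (h1 : η < 1) :
    ∀ᶠ y : ℝ in atTop, 4 * y ^ η ≤ Nat.primeCounting ⌊y⌋₊ := by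
  have hlog := (isLittleO_log_rpow_atTop (r := 1 - η) (by linarith)).bound
    (c := 1 / 32) (by norm_num)
  filter_upwards [hlog, eventually_ge_atTop 2] with y hy hy2
  have hy0 : 0 < y := by linarith
  have hlogpos : 0 < Real.log y := Real.log_pos (by linarith)
  rw [Real.norm_of_nonneg hlogpos.le, Real.norm_of_nonneg (by positivity)] at hy
  refine le_trans ?_ (Chebyshev.pi_ge' (by linarith))
  rw [le_div_iff₀ hlogpos]
  have e1 : y ^ η * y ^ (1 - η) = y := by
    rw [← Real.rpow_add hy0]; simp
  have e2 : y ^ (1 - η) ≤ y := by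
    calc y ^ (1 - η) ≤ y ^ (1 : ℝ) := Real.rpow_le_rpow_of_exponent_le (by linarith) (by linarith)
      _ = y := Real.rpow_one y
  have e3 : y ^ η * Real.log y ≤ y ^ η * (1 / 32 * y ^ (1 - η)) := by gcongr
  have e4 : Real.log (y + 2) ≤ 2 * Real.log y := by
    rw [← Real.log_rpow hy0 2]
    refine Real.log_le_log (by linarith) ?_
    norm_num
    nlinarith
  have e5 : 1 / 2 < Real.log 2 := by have := Real.log_two_gt_d9; linarith
  nlinarith

lemma eventually_two_mul_rpow_le {α β : ℝ} (hα : 0 ≤ α) (hβ : α < β) :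
    ∀ᶠ x : ℝ in atTop, 2 * x ^ α ≤ Nat.primeCounting ⌊x ^ β / 2⌋₊ := by
  have hβ0 : 0 < β := hα.trans_lt hβ
  have ht : Tendsto (fun x : ℝ => x ^ β / 2) atTop atTop :=
    (tendsto_rpow_atTop hβ0).atTop_div_const (by norm_num)
  filter_upwards [ht.eventually (eventually_rpow_le_primeCounting (η := α / β) (by positivity)
    ((div_lt_one hβ0).2 hβ)), eventually_ge_atTop 1] with x hx hx1
  refine le_trans ?_ hx
  have hx0 : 0 ≤ x := by linarith
  rw [Real.div_rpow (by positivity) (by norm_num), ← Real.rpow_mul hx0,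
    mul_div_cancel₀ _ hβ0.ne']
  have h2 : (2 : ℝ) ^ (α / β) ≤ 2 := by
    calc (2 : ℝ) ^ (α / β) ≤ 2 ^ (1 : ℝ) :=
          Real.rpow_le_rpow_of_exponent_le (by norm_num) ((div_le_one hβ0).2 hβ.le)
      _ = 2 := Real.rpow_one 2
  have : x ^ α / 2 ≤ x ^ α / 2 ^ (α / β) := by gcongr
  linarith

lemma half_le_floor {y : ℝ} (hy : 1 ≤ y) : y / 2 ≤ (⌊y⌋₊ : ℝ) := by
  have h1 := Nat.lt_floor_add_one y
  have h2 : (1 : ℝ) ≤ ⌊y⌋₊ := by exact_mod_cast Nat.one_le_floor_iff y |>.2 hy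
  linarith

end ThreeSummands

open ThreeSummands

/-- Ternary congruence `m₁/x₁^s + m₂/x₂^s + m₃/x₃^s ≡ λ (mod p)` is solvable for
`|M| = ⌊p^{14/29}⌋` and `H = ⌊p^{14/29+ε}⌋`, provided `p` is large enough. -/
theorem three_summands (s : ℕ) (hs : 0 < s) (ε : ℝ) (hε : 0 < ε) :
    ∃ p₀ : ℕ, ∀ p : ℕ, p.Prime → p₀ < p →
      ∀ M : Finset (ZMod p), (∀ m ∈ M, m ≠ 0) →
      M.card = ⌊(p : ℝ) ^ ((14 : ℝ) / 29)⌋₊ →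
      ∀ H : ℕ, H = ⌊(p : ℝ) ^ ((14 : ℝ) / 29 + ε)⌋₊ →
      ∀ lam : ℤ, ∃ m₁ ∈ M, ∃ m₂ ∈ M, ∃ m₃ ∈ M, ∃ x₁ x₂ x₃ : ℕ,
        (1 ≤ x₁ ∧ x₁ ≤ H) ∧ (1 ≤ x₂ ∧ x₂ ≤ H) ∧ (1 ≤ x₃ ∧ x₃ ≤ H) ∧
        m₁ * ((x₁ : ZMod p)⁻¹) ^ s + m₂ * ((x₂ : ZMod p)⁻¹) ^ s
          + m₃ * ((x₃ : ZMod p)⁻¹) ^ s = (lam : ZMod p) := by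
  set e : ℝ := min ε (1 / 100) with he
  have he0 : 0 < e := lt_min hε (by norm_num)
  have heε : e ≤ ε := min_le_left _ _
  have he1 : e ≤ 1 / 100 := min_le_right _ _
  -- The first two conditions provide `|A|` and `|B|`; in the third, `6144 = 6 * 2 ^ 10`, where
  -- `2 ^ 10` comes from replacing `|M|` and `L` by half of the powers of `p` they round down.
  obtain ⟨x₀, hx₀⟩ := Filter.eventually_atTop.1
    ((eventually_two_mul_rpow_le (α := 14 / 29 + e / 2) (β := 14 / 29 + e)
      (by linarith) (by linarith)).and
    ((eventually_two_mul_rpow_le (α := 7 / 29) (β := 7 / 29 + e / 2)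
      (by linarith) (by linarith)).and
    ((tendsto_rpow_atTop (y := 3 * e) (by linarith)).eventually
      (Filter.eventually_gt_atTop (6144 * (1 + (s : ℝ)) ^ 7)))))
  refine ⟨max 3 ⌈x₀⌉₊, fun p hp hpp M hM hMcard H hH lam => ?_⟩
  have : Fact p.Prime := ⟨hp⟩
  have hp3 : 3 < p := (le_max_left _ _).trans_lt hpp
  have hx : x₀ ≤ p := (Nat.le_ceil _).trans
    (by exact_mod_cast ((le_max_right _ _).trans_lt hpp).le)
  obtain ⟨hπN, hπQ, hbig⟩ := hx₀ _ hx
  have hx1 : (1 : ℝ) < p := by exact_mod_cast hp.one_lt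
  have hx0 : (0 : ℝ) < p := by linarith
  have mono : ∀ {α β : ℝ}, α ≤ β → (p : ℝ) ^ α ≤ (p : ℝ) ^ β := fun h =>
    Real.rpow_le_rpow_of_exponent_le hx1.le h
  have one_le : ∀ {α : ℝ}, 0 ≤ α → 1 ≤ (p : ℝ) ^ α := fun h => Real.one_le_rpow hx1.le h
  have lt_self : ∀ {α : ℝ}, α < 1 → (p : ℝ) ^ α < p := fun h => by
    simpa using Real.rpow_lt_rpow_of_exponent_lt hx1 h
  set N := ⌊(p : ℝ) ^ (14 / 29 + e) / 2⌋₊ with hN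
  set Q := ⌊(p : ℝ) ^ (7 / 29 + e / 2) / 2⌋₊ with hQ
  set L := ⌊(p : ℝ) ^ ((7 : ℝ) / 29)⌋₊ with hL
  have hNle : (N : ℝ) ≤ (p : ℝ) ^ (14 / 29 + e) / 2 := Nat.floor_le (by positivity)
  have hQle : (Q : ℝ) ≤ (p : ℝ) ^ (7 / 29 + e / 2) / 2 := Nat.floor_le (by positivity)
  have hLle : (L : ℝ) ≤ (p : ℝ) ^ ((7 : ℝ) / 29) := Nat.floor_le (by positivity)
  have hMle : (#M : ℝ) ≤ (p : ℝ) ^ ((14 : ℝ) / 29) := by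
    rw [hMcard]; exact Nat.floor_le (by positivity)
  have hQN : Q ≤ N := Nat.floor_le_floor (by
    have := mono (show (7 : ℝ) / 29 + e / 2 ≤ 14 / 29 + e by linarith)
    linarith)
  have hNN : N * N < p := by
    have h1 : (N : ℝ) * N ≤ (p : ℝ) ^ (14 / 29 + e) / 2 * ((p : ℝ) ^ (14 / 29 + e) / 2) := by
      gcongr
    have h2 : (p : ℝ) ^ (14 / 29 + e) * (p : ℝ) ^ (14 / 29 + e) < p := by
      rw [← Real.rpow_add hx0]
      exact lt_self (by linarith)
    have h3 : (N : ℝ) * N < p := by linarith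
    exact_mod_cast h3
  have hNQL : ((N + Q * L : ℕ) : ℝ) ≤ (p : ℝ) ^ (14 / 29 + e) := by
    have h1 : (Q : ℝ) * L ≤ (p : ℝ) ^ (7 / 29 + e / 2) / 2 * (p : ℝ) ^ ((7 : ℝ) / 29) := by
      gcongr
    have h2 : (p : ℝ) ^ (7 / 29 + e / 2) * (p : ℝ) ^ ((7 : ℝ) / 29) ≤ (p : ℝ) ^ (14 / 29 + e) := by
      rw [← Real.rpow_add hx0]
      exact mono (by linarith)
    push_cast
    linarith
  have hsz : N + Q * L < p := by
    have : ((N + Q * L : ℕ) : ℝ) < p := hNQL.trans_lt (lt_self (by linarith))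
    exact_mod_cast this
  have hLp : L < p := by
    have : (L : ℝ) < p := hLle.trans_lt (lt_self (by norm_num))
    exact_mod_cast this
  have hHge : N + Q * L ≤ H := by
    rw [hH]
    exact Nat.le_floor (hNQL.trans (mono (by linarith)))
  set A := Nat.primesLE N \ Nat.primesLE Q with hA
  set B := Nat.primesLE Q with hB
  have hBcard : 2 * (p : ℝ) ^ ((7 : ℝ) / 29) ≤ #B := by
    rw [hB, Nat.primesLE_card_eq_primeCounting]
    exact hπQ
  have hAcard : (p : ℝ) ^ (14 / 29 + e / 2) ≤ #A := by
    have h1 : #(Nat.primesLE N) ≤ #A + #(Nat.primesLE Q) := by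
      rw [hA]
      exact card_le_card_sdiff_add_card
    have h2 : #(Nat.primesLE Q) ≤ Q := by
      rw [Nat.primesLE_eq_filter_Icc_one]
      exact (card_filter_le _ _).trans (by simp)
    have h3 : Nat.primeCounting N ≤ #A + Q := by
      rw [← Nat.primesLE_card_eq_primeCounting]
      omega
    have h4 : (Nat.primeCounting N : ℝ) ≤ #A + Q := by exact_mod_cast h3
    have h5 := mono (show (7 : ℝ) / 29 + e / 2 ≤ 14 / 29 + e / 2 by linarith)
    have h6 : 0 < (p : ℝ) ^ (7 / 29 + e / 2) := by positivity
    linarith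
  have hMA : #M ≤ #A := by
    have := mono (show (14 : ℝ) / 29 ≤ 14 / 29 + e / 2 by linarith)
    exact_mod_cast (hMle.trans (this.trans hAcard))
  have hLAB : L ^ 3 ≤ #A * #B := by
    have h1 : (L : ℝ) ^ 3 ≤ (p : ℝ) ^ (14 / 29 + e / 2) * (2 * (p : ℝ) ^ ((7 : ℝ) / 29)) := by
      have h2 : (L : ℝ) ^ 3 ≤ ((p : ℝ) ^ ((7 : ℝ) / 29)) ^ 3 := by gcongr
      have h3 : ((p : ℝ) ^ ((7 : ℝ) / 29)) ^ 3
          ≤ (p : ℝ) ^ (14 / 29 + e / 2) * (p : ℝ) ^ ((7 : ℝ) / 29) := by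
        rw [← Real.rpow_mul_natCast hx0.le, ← Real.rpow_add hx0]
        exact mono (by push_cast; linarith)
      have h4 : 0 < (p : ℝ) ^ (14 / 29 + e / 2) * (p : ℝ) ^ ((7 : ℝ) / 29) := by positivity
      linarith
    have h5 : (L : ℝ) ^ 3 ≤ #A * #B := h1.trans (by gcongr)
    exact_mod_cast h5
  have hmain : 6 * (1 + (s : ℝ)) ^ 7 * p ^ 7 < (#M : ℝ) ^ 7 * L ^ 3 * #A ^ 6 := by
    have hMge : (p : ℝ) ^ ((14 : ℝ) / 29) / 2 ≤ #M := by
      rw [hMcard]; exact half_le_floor (one_le (by norm_num))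
    have hLge : (p : ℝ) ^ ((7 : ℝ) / 29) / 2 ≤ L := half_le_floor (one_le (by norm_num))
    have hexp : ((p : ℝ) ^ ((14 : ℝ) / 29)) ^ 7 * ((p : ℝ) ^ ((7 : ℝ) / 29)) ^ 3
        * ((p : ℝ) ^ (14 / 29 + e / 2)) ^ 6 = (p : ℝ) ^ 7 * (p : ℝ) ^ (3 * e) := by
      simp only [← Real.rpow_mul_natCast hx0.le]
      rw [← Real.rpow_natCast (p : ℝ) 7, ← Real.rpow_add hx0, ← Real.rpow_add hx0,
        ← Real.rpow_add hx0]
      congr 1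
      push_cast
      ring
    calc 6 * (1 + (s : ℝ)) ^ 7 * p ^ 7
        = (p : ℝ) ^ 7 * (6144 * (1 + (s : ℝ)) ^ 7) / 1024 := by ring
      _ < (p : ℝ) ^ 7 * (p : ℝ) ^ (3 * e) / 1024 := by gcongr
      _ = ((p : ℝ) ^ ((14 : ℝ) / 29) / 2) ^ 7 * ((p : ℝ) ^ ((7 : ℝ) / 29) / 2) ^ 3
            * ((p : ℝ) ^ (14 / 29 + e / 2)) ^ 6 := by
          rw [← hexp]; ring
      _ ≤ _ := by gcongr
  obtain ⟨m₁, h₁, m₂, h₂, m₃, h₃, x₁, x₂, x₃, b₁, b₂, b₃, h⟩ := ternary_core hs hp3 M hM A B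
    (N := N) (Q := Q) (L := L)
    (fun n hn => by
      have := Nat.mem_primesLE.1 (mem_sdiff.1 hn).1
      exact ⟨this.2, this.1⟩)
    (fun q hq => by
      have := Nat.mem_primesLE.1 hq
      exact ⟨this.2, this.1⟩)
    sdiff_disjoint hQN hNN hsz hLp hLAB hMA hmain (lam : ZMod p)
  exact ⟨m₁, h₁, m₂, h₂, m₃, h₃, x₁, x₂, x₃, ⟨b₁.1, b₁.2.trans hHge⟩, ⟨b₂.1, b₂.2.trans hHge⟩,
    ⟨b₃.1, b₃.2.trans hHge⟩, h⟩
end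

section
/- Let p be a prime and let I and J be subsets of F_p^* each consisting of ⌊√(8p)⌋ consecutive integers modulo p (i.e., each is an interval of consecutive residues none of which is 0 mod p). Then every integer λ can be represented in the form m₁·x₁^{-1} + m₂·x₂^{-1} ≡ λ (mod p) with m₁, m₂ ∈ I and x₁, x₂ ∈ J. -/
/-!
Put `A = I / J`, the set of ratios `m / x`. If the complement `B` of `A` has fewer than `p / 2`
elements, then `A` meets `lam - A` by pigeonhole, which is the claim.

To bound `B`, write `L` for the length of the intervals, so that `(L + 1)² > 8p`, and let `r ≠ 0`.
Thue's lemma gives coprime `a, b` with `a = r b` in `ZMod p` and `0 < |a|, |b| ≤ √p`. The points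
`(m, x)` of the lattice `m ≡ r x (mod p)` include the integer points of each line
`b m - a x = k p`. Along such a line `x` runs through a progression of step `b` and
consecutive lines are `p / b` apart in the `m` direction, so if `|a| < b` and
`p + |a| (b - 1) < b (L + 1)` the box `I × J` contains a lattice point (`exists_point_on_line`),
that is `r ∈ A`. This inequality holds as soon as `p ≤ 5 b²`. When `|a| > |b|` the roles
of `I` and `J` are exchanged. Hence every nonzero `r ∈ B` is of the form `± u / v` with
`1 ≤ u, v ≤ c`, where `c = ⌊√((p - 1) / 5)⌋`, and `|B| ≤ 1 + 2 c² < p / 2`.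
-/

/-- Some line `b m - a x = k p` has an integer point in the box `(K, K + L] × (M, M + L]`. -/
lemma exists_point_on_line (p a b K M L : ℤ) (hp : 0 < p) (hb : 0 < b) (hbL : b ≤ L)
    (hab : IsCoprime a b) (h : p + |a| * (b - 1) < b * (L + 1)) :
    ∃ m x k : ℤ, K < m ∧ m ≤ K + L ∧ M < x ∧ x ≤ M + L ∧ b * m = k * p + a * x := by
  -- `low` is the least value of `a * x` on the window `(M, M + b]`.
  obtain ⟨low, hlow⟩ : ∃ low : ℤ, ∀ x, M < x → x ≤ M + b →
      low ≤ a * x ∧ a * x ≤ low + |a| * (b - 1) := by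
    rcases le_total 0 a with ha | ha
    · refine ⟨a * (M + 1), fun x h1 h2 => ?_⟩
      rw [abs_of_nonneg ha]
      constructor <;> nlinarith
    · refine ⟨a * (M + b), fun x h1 h2 => ?_⟩
      rw [abs_of_nonpos ha]
      constructor <;> nlinarith
  obtain ⟨k, hk1, hk2⟩ : ∃ k : ℤ, b * K < k * p + low ∧ k * p + low ≤ b * K + p := by
    refine ⟨(b * K - low) / p + 1, ?_, ?_⟩
    · have h1 := Int.emod_add_mul_ediv (b * K - low) p
      have h2 := Int.emod_lt_of_pos (b * K - low) hp
      linarith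
    · have h1 := Int.emod_add_mul_ediv (b * K - low) p
      have h2 := Int.emod_nonneg (b * K - low) hp.ne'
      linarith
  obtain ⟨u, v, huv⟩ := hab
  -- The residue class of `x` modulo `b` is determined by `a * x ≡ -k * p`.
  obtain ⟨x, hx1, hx2, q, hq⟩ : ∃ x : ℤ, M < x ∧ x ≤ M + b ∧ ∃ q : ℤ, x = -k * p * u + b * q := by
    have h1 := Int.emod_add_mul_ediv (-k * p * u - M - 1) b
    have h2 := Int.emod_lt_of_pos (-k * p * u - M - 1) hb
    have h3 := Int.emod_nonneg (-k * p * u - M - 1) hb.ne'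
    exact ⟨M + 1 + (-k * p * u - M - 1) % b, by linarith, by linarith,
      -((-k * p * u - M - 1) / b), by linarith⟩
  have hm : b * (k * p * v + a * q) = k * p + a * x := by
    rw [hq]
    linear_combination k * p * huv
  obtain ⟨h1, h2⟩ := hlow x hx1 hx2
  refine ⟨k * p * v + a * q, x, k, ?_, ?_, hx1, by linarith, hm⟩
  · exact lt_of_mul_lt_mul_left (by linarith : b * K < b * _) hb.le
  · have : b * (k * p * v + a * q) < b * (K + L + 1) := by rw [hm]; linarith
    have := lt_of_mul_lt_mul_left this hb.le
    linarith

/-- Up to lower-order terms, squaring the inequality and using `(L + 1)² > 8p` turns the claim into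
`(p + b²)² < 8 p b²`, that is `p² - 6 p b² + b⁴ < 0`, which holds for `b² ≤ p ≤ 5 b²`. -/
lemma spacing_bound (p b L : ℤ) (hb : 2 ≤ b) (hL : 0 ≤ L) (h8 : 8 * p < (L + 1) ^ 2)
    (h1 : b ^ 2 ≤ p) (h5 : p ≤ 5 * b ^ 2) : p + (b - 1) * (b - 1) < b * (L + 1) := by
  by_contra! hcon
  have h2 : b * (L + 1) ≤ p + b ^ 2 - 3 := by nlinarith
  have h3 : (b * (L + 1)) ^ 2 ≤ (p + b ^ 2 - 3) ^ 2 :=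
    pow_le_pow_left₀ (by positivity) h2 2
  have h4 : b ^ 2 * (8 * p) ≤ b ^ 2 * (L + 1) ^ 2 := by gcongr
  have h6 : 0 ≤ (p - b ^ 2) * (5 * b ^ 2 - p) := mul_nonneg (by linarith) (by linarith)
  nlinarith [sq_nonneg (b ^ 2)]

lemma ratio_of_coprime (p : ℕ) [Fact p.Prime] (r : ZMod p) (a b K M L : ℤ) (hb : 0 < b)
    (hab : IsCoprime a b) (hlt : |a| < b) (hr : (a : ZMod p) = r * b)
    (hp : 11 ≤ p) (hL : 0 ≤ L) (h8 : 8 * (p : ℤ) < (L + 1) ^ 2)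
    (h1 : b ^ 2 ≤ p) (h5 : (p : ℤ) ≤ 5 * b ^ 2) :
    ∃ m x : ℤ, K < m ∧ m ≤ K + L ∧ M < x ∧ x ≤ M + L ∧ (m : ZMod p) = r * x := by
  have hp' : (11 : ℤ) ≤ p := by exact_mod_cast hp
  have hb2 : 2 ≤ b := by nlinarith
  have hbL : b ≤ L := by nlinarith
  have hs := spacing_bound p b L hb2 hL h8 h1 h5
  have hle : |a| * (b - 1) ≤ (b - 1) * (b - 1) :=
    mul_le_mul_of_nonneg_right (by linarith) (by linarith)
  obtain ⟨m, x, k, c1, c2, c3, c4, e⟩ := exists_point_on_line p a b K M L (by linarith) hb hbL hab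
    (by linarith)
  refine ⟨m, x, c1, c2, c3, c4, ?_⟩
  have hb0 : (b : ZMod p) ≠ 0 := by
    intro h
    rw [ZMod.intCast_zmod_eq_zero_iff_dvd] at h
    have := Int.le_of_dvd hb h
    nlinarith
  have e' := congrArg (fun z : ℤ => (z : ZMod p)) e
  push_cast at e'
  rw [ZMod.natCast_self, hr] at e'
  apply mul_left_cancel₀ hb0
  linear_combination e'

/-- Thue's lemma, with coprime numerator and denominator. -/
lemma thue (p : ℕ) [Fact p.Prime] (r : ZMod p) (hr : r ≠ 0) :
    ∃ a b : ℤ, a ≠ 0 ∧ 0 < b ∧ IsCoprime a b ∧ a ^ 2 ≤ p ∧ b ^ 2 ≤ p ∧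
      (a : ZMod p) = r * b := by
  have hp := (Fact.out : p.Prime)
  set s := Nat.sqrt p with hs
  have hsp : s * s ≤ p := Nat.sqrt_le p
  have hslt : s < p := Nat.sqrt_lt_self hp.one_lt
  have hcard : (Finset.univ : Finset (ZMod p)).card <
      (Finset.range (s + 1) ×ˢ Finset.range (s + 1)).card := by
    rw [Finset.card_univ, ZMod.card, Finset.card_product, Finset.card_range]
    exact Nat.lt_succ_sqrt p
  obtain ⟨⟨a1, b1⟩, h1, ⟨a2, b2⟩, h2, hne, heq⟩ :=
    Finset.exists_ne_map_eq_of_card_lt_of_maps_to hcard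
      (f := fun z : ℕ × ℕ => (z.1 : ZMod p) - r * z.2) (fun _ _ => Finset.mem_univ _)
  simp only [Finset.mem_product, Finset.mem_range] at h1 h2
  simp only at heq
  have small : ∀ z : ℤ, |z| ≤ s → (z : ZMod p) = 0 → z = 0 := by
    intro z hz h
    rw [ZMod.intCast_zmod_eq_zero_iff_dvd] at h
    exact Int.eq_zero_of_abs_lt_dvd h (by omega)
  obtain ⟨a, ha⟩ : ∃ a : ℤ, a = a1 - a2 := ⟨_, rfl⟩
  obtain ⟨b, hb⟩ : ∃ b : ℤ, b = b1 - b2 := ⟨_, rfl⟩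
  have has : |a| ≤ s := by rw [abs_le]; omega
  have hbs : |b| ≤ s := by rw [abs_le]; omega
  have hab : (a : ZMod p) = r * b := by
    rw [ha, hb]; push_cast; linear_combination heq
  have hb0 : b ≠ 0 := by
    intro h
    have h3 : a = 0 := small a has (by rw [hab, h]; simp)
    apply hne
    ext <;> simp <;> omega
  have ha0 : a ≠ 0 := by
    intro h
    rw [h] at hab
    have : (b : ZMod p) = 0 := by
      have := hab.symm
      simpa [hr] using this
    exact hb0 (small b hbs this)
  -- Divide by the gcd, which is invertible modulo `p`.
  obtain ⟨g, a', b', hg, hco, ea, eb⟩ : ∃ g a' b' : ℤ, 0 < g ∧ IsCoprime a' b' ∧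
      a = a' * g ∧ b = b' * g := by
    have hg : 0 < Int.gcd a b := Int.gcd_pos_of_ne_zero_left _ ha0
    obtain ⟨a', b', h, e1, e2⟩ := Int.exists_gcd_one hg
    exact ⟨Int.gcd a b, a', b', by exact_mod_cast hg, Int.isCoprime_iff_gcd_eq_one.2 h, e1, e2⟩
  have ha'0 : a' ≠ 0 := by rintro rfl; simp at ea; exact ha0 ea
  have hb'0 : b' ≠ 0 := by rintro rfl; simp at eb; exact hb0 eb
  have ea' : |a'| ≤ s := by
    rw [ea, abs_mul, abs_of_pos hg] at has
    nlinarith [abs_nonneg a']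
  have eb' : |b'| ≤ s := by
    rw [eb, abs_mul, abs_of_pos hg] at hbs
    nlinarith [abs_nonneg b']
  have hg0 : (g : ZMod p) ≠ 0 := by
    intro h
    apply ha0
    apply small a has
    rw [ea]; push_cast; rw [h]; simp
  have hr' : (a' : ZMod p) = r * b' := by
    apply mul_right_cancel₀ hg0
    rw [ea, eb] at hab
    push_cast at hab
    linear_combination hab
  have hsp' : (s : ℤ) * s ≤ p := by exact_mod_cast hsp
  have qa : a' ^ 2 ≤ p := by rw [← sq_abs]; nlinarith [abs_nonneg a']
  have qb : b' ^ 2 ≤ p := by rw [← sq_abs]; nlinarith [abs_nonneg b']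
  rcases lt_or_gt_of_ne hb'0 with h | h
  · exact ⟨-a', -b', by simpa using ha'0, by linarith, hco.neg_neg, by simpa using qa,
      by simpa using qb, by push_cast; rw [hr']; ring⟩
  · exact ⟨a', b', ha'0, h, hco, qa, qb, hr'⟩

/-- A nonzero ratio not attained on the box is a quotient of two integers below `√(p / 5)`. -/
lemma small_of_not_ratio (p : ℕ) [Fact p.Prime] (r : ZMod p) (hr0 : r ≠ 0) (K M L : ℤ)
    (hp : 11 ≤ p) (hL : 0 ≤ L) (h8 : 8 * (p : ℤ) < (L + 1) ^ 2)
    (hno : ¬ ∃ m x : ℤ, K < m ∧ m ≤ K + L ∧ M < x ∧ x ≤ M + L ∧ (m : ZMod p) = r * x) :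
    ∃ a b : ℤ, a ≠ 0 ∧ 0 < b ∧ 5 * a ^ 2 < p ∧ 5 * b ^ 2 < p ∧ (a : ZMod p) = r * b := by
  obtain ⟨a, b, ha, hb, hco, qa, qb, hr⟩ := thue p r hr0
  have hp' : (11 : ℤ) ≤ p := by exact_mod_cast hp
  rcases lt_trichotomy |a| b with h | h | h
  · have h5 : 5 * b ^ 2 < p := by
      by_contra! h5
      exact hno (ratio_of_coprime p r a b K M L hb hco h hr hp hL h8 qb h5)
    have := sq_abs a
    exact ⟨a, b, ha, hb, by nlinarith [abs_nonneg a], h5, hr⟩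
  · have hb1 : b = 1 := by
      have hd : b ∣ a := (dvd_abs b a).1 (h ▸ dvd_rfl)
      have hu := hco.isUnit_of_dvd' hd dvd_rfl
      rcases Int.isUnit_iff.1 hu with h | h <;> omega
    have := sq_abs a
    rw [h, hb1] at this
    exact ⟨a, b, ha, hb, by linarith, by rw [hb1]; linarith, hr⟩
  · have h5 : 5 * a ^ 2 < p := by
      by_contra! h5
      -- Exchange the coordinates and normalise the sign of the new denominator `a`.
      obtain ⟨m, x, c1, c2, c3, c4, e⟩ : ∃ m x : ℤ, M < m ∧ m ≤ M + L ∧ K < x ∧ x ≤ K + L ∧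
          (m : ZMod p) = r⁻¹ * x := by
        have hr' : (b : ZMod p) = r⁻¹ * a := by rw [hr]; field_simp
        rcases lt_or_gt_of_ne ha with hn | hn
        · rw [abs_of_neg hn] at h
          exact ratio_of_coprime p r⁻¹ (-b) (-a) M K L (by linarith) hco.symm.neg_neg
            (by rwa [abs_neg, abs_of_pos hb]) (by push_cast; rw [hr']; ring) hp hL h8
            (by simpa using qa) (by simpa using h5)
        · rw [abs_of_pos hn] at h
          exact ratio_of_coprime p r⁻¹ b a M K L hn hco.symm
            (by rwa [abs_of_pos hb]) hr' hp hL h8 qa h5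
      exact hno ⟨x, m, c3, c4, c1, c2, by rw [e]; field_simp⟩
    have := sq_abs a
    exact ⟨a, b, ha, hb, h5, by nlinarith, hr⟩

lemma mem_interval (p L : ℕ) (K m : ℤ) (h1 : K < m) (h2 : m ≤ K + L) :
    (m : ZMod p) ∈ (Finset.range L).image (fun i : ℕ => ((K + 1 + i : ℤ) : ZMod p)) := by
  rw [Finset.mem_image]
  refine ⟨(m - K - 1).toNat, by rw [Finset.mem_range]; omega, ?_⟩
  congr 1
  omega

/-- If `I, J ⊆ F_p^*` are intervals of `⌊√(8p)⌋` consecutive residues, every `λ` is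
representable as `m₁/x₁ + m₂/x₂ mod p` with `m_i ∈ I`, `x_i ∈ J`. -/
theorem ratio_of_two_intervals (p : ℕ) (hp : p.Prime) (I J : Finset (ZMod p))
    (hI : ∃ K : ℤ, I = (Finset.range ⌊Real.sqrt (8 * p)⌋₊).image
        (fun i : ℕ => ((K + 1 + i : ℤ) : ZMod p)))
    (hI0 : (0 : ZMod p) ∉ I)
    (hJ : ∃ K : ℤ, J = (Finset.range ⌊Real.sqrt (8 * p)⌋₊).image
        (fun i : ℕ => ((K + 1 + i : ℤ) : ZMod p)))
    (hJ0 : (0 : ZMod p) ∉ J) (lam : ℤ) :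
    ∃ m₁ ∈ I, ∃ m₂ ∈ I, ∃ x₁ ∈ J, ∃ x₂ ∈ J,
      m₁ * x₁⁻¹ + m₂ * x₂⁻¹ = (lam : ZMod p) := by
  classical
  have : Fact p.Prime := ⟨hp⟩
  obtain ⟨K, hK⟩ := hI
  obtain ⟨M, hM⟩ := hJ
  have h8 : 8 * p < (⌊Real.sqrt (8 * p)⌋₊ + 1) ^ 2 := by
    have h := (Real.sqrt_lt' (by positivity)).1 (Nat.lt_floor_add_one (Real.sqrt (8 * p)))
    exact_mod_cast h
  generalize ⌊Real.sqrt (8 * p)⌋₊ = L at *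
  -- An interval of length at least `p` would contain `0`.
  have hLp : L < p := by
    by_contra! hLp
    apply hI0
    have hp0 : (p : ℤ) ≠ 0 := by exact_mod_cast hp.ne_zero
    have hpos : (0 : ℤ) < p := by exact_mod_cast hp.pos
    have h1 := Int.emod_add_mul_ediv K p
    have h2 := Int.emod_nonneg K hp0
    have h3 := Int.emod_lt_of_pos K hpos
    have hz := mem_interval p L K (p * (K / p + 1)) (by linarith)
      (by have : (p : ℤ) ≤ L := by exact_mod_cast hLp
          linarith)
    rw [hK]
    simpa using hz
  have hp11 : 11 ≤ p := by
    have h9 : 8 < p := by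
      by_contra! h
      nlinarith
    by_contra! h
    interval_cases p <;> revert hp <;> norm_num
  have h8' : 8 * (p : ℤ) < ((L : ℤ) + 1) ^ 2 := by exact_mod_cast h8
  obtain ⟨B, hBdef⟩ : ∃ B : Finset (ZMod p),
      ∀ r, r ∈ B ↔ ¬ ∃ m ∈ I, ∃ x ∈ J, m * x⁻¹ = r :=
    ⟨Finset.univ.filter fun r => ¬ ∃ m ∈ I, ∃ x ∈ J, m * x⁻¹ = r, by simp⟩
  set c := Nat.sqrt ((p - 1) / 5) with hc
  have hc5 : 5 * (c * c) ≤ p - 1 := by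
    have := Nat.sqrt_le ((p - 1) / 5)
    rw [← hc] at this
    omega
  have hle : ∀ n : ℕ, 5 * n ^ 2 < p → n ≤ c := by
    intro n hn
    rw [hc, Nat.le_sqrt, ← pow_two]
    omega
  have hBsub : B ⊆ insert 0 ((({1, -1} : Finset (ZMod p)) ×ˢ
      (Finset.Icc 1 c ×ˢ Finset.Icc 1 c)).image
        fun z => z.1 * ((z.2.1 : ZMod p) * (z.2.2 : ZMod p)⁻¹)) := by
    intro r hr
    rw [hBdef] at hr
    rw [Finset.mem_insert]
    by_cases hr0 : r = 0
    · exact Or.inl hr0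
    right
    obtain ⟨a, b, ha, hb, h5a, h5b, e⟩ := small_of_not_ratio p r hr0 K M L hp11 (by positivity)
      h8' (by
        rintro ⟨m, x, c1, c2, c3, c4, e⟩
        have hm := mem_interval p L K m c1 c2
        have hx := mem_interval p L M x c3 c4
        rw [← hK] at hm
        rw [← hM] at hx
        have hx0 : (x : ZMod p) ≠ 0 := fun h => hJ0 (h ▸ hx)
        exact hr ⟨m, hm, x, hx, by rw [e]; field_simp⟩)
    have hb0 : (b : ZMod p) ≠ 0 := by
      intro h
      rw [ZMod.intCast_zmod_eq_zero_iff_dvd] at h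
      have := Int.le_of_dvd hb h
      nlinarith
    have hac : a.natAbs ≤ c := hle _ (by zify; rwa [sq_abs])
    have hbc : b.natAbs ≤ c := hle _ (by zify; rwa [sq_abs])
    have hbb : ((b.natAbs : ℕ) : ZMod p) = b := by
      rw [← Int.cast_natCast, Int.natAbs_of_nonneg hb.le]
    have hre : r = a * (b : ZMod p)⁻¹ := by rw [e]; field_simp
    have hmem : ∀ n : ℤ, n ≠ 0 → n.natAbs ≤ c → n.natAbs ∈ Finset.Icc 1 c := by
      intro n hn h
      rw [Finset.mem_Icc]
      omega
    rw [Finset.mem_image]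
    rcases Int.natAbs_eq a with h | h
    · refine ⟨(1, a.natAbs, b.natAbs), ?_, ?_⟩
      · simp only [Finset.mem_product]
        exact ⟨by simp, hmem a ha hac, hmem b hb.ne' hbc⟩
      · have ha' : (a : ZMod p) = (a.natAbs : ℕ) := by
          conv_lhs => rw [h]
          simp only [Int.cast_natCast]
        simp only [hbb]
        rw [hre, ha']
        ring
    · refine ⟨(-1, a.natAbs, b.natAbs), ?_, ?_⟩
      · simp only [Finset.mem_product]
        exact ⟨by simp, hmem a ha hac, hmem b hb.ne' hbc⟩
      · have ha' : (a : ZMod p) = -((a.natAbs : ℕ) : ZMod p) := by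
          conv_lhs => rw [h]
          simp only [Int.cast_natCast, Int.cast_neg]
        simp only [hbb]
        rw [hre, ha']
        ring
  have hBcard : B.card ≤ 2 * (c * c) + 1 := by
    refine (Finset.card_le_card hBsub).trans ((Finset.card_insert_le _ _).trans ?_)
    refine Nat.add_le_add_right (Finset.card_image_le.trans ?_) 1
    rw [Finset.card_product, Finset.card_product, Nat.card_Icc, Nat.add_sub_cancel]
    exact Nat.mul_le_mul_right _ Finset.card_le_two
  obtain ⟨r, hr⟩ : ∃ r, r ∉ B ∪ B.image fun z => (lam : ZMod p) - z := by
    by_contra! hall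
    have h1 : (Finset.univ : Finset (ZMod p)).card ≤
        (B ∪ B.image fun z => (lam : ZMod p) - z).card :=
      Finset.card_le_card fun r _ => hall r
    rw [Finset.card_univ, ZMod.card] at h1
    have h2 := Finset.card_union_le B (B.image fun z => (lam : ZMod p) - z)
    have h3 : (B.image fun z => (lam : ZMod p) - z).card ≤ B.card := Finset.card_image_le
    omega
  rw [Finset.mem_union, not_or] at hr
  have hr2 : (lam : ZMod p) - r ∉ B := fun h =>
    hr.2 (Finset.mem_image.2 ⟨_, h, sub_sub_cancel _ _⟩)
  obtain ⟨m₁, hm₁, x₁, hx₁, e₁⟩ := not_not.1 (mt (hBdef r).2 hr.1)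
  obtain ⟨m₂, hm₂, x₂, hx₂, e₂⟩ := not_not.1 (mt (hBdef _).2 hr2)
  exact ⟨m₁, hm₁, m₂, hm₂, x₁, hx₁, x₂, hx₂, by rw [e₁, e₂]; ring⟩
end

section
/- Let s be a fixed positive integer, p a prime, M a subset of F_p^* with M = |M| < p^{1/2}, and H a positive integer with H < p^{1/2}. Define M·H^{-s} = { m·h^{-s} mod p : m ∈ M, h ∈ {1, 2, ..., H} }. Then |M·H^{-s}| ≫ min{ M·H / log p , H² / (log p)² }, where the implied constant depends only on s. -/
/-!
Restrict the dilations to primes `q ≤ H` and bound the collisions of `(m, q) ↦ m * q⁻ˢ` on `M × Q`.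
By Cauchy-Schwarz, `(|M| |Q|)²` is at most the size of the image times the number of quadruples with
`m₁ * q₁⁻ˢ = m₂ * q₂⁻ˢ`. Quadruples with `q₁ = q₂` have `m₁ = m₂`, so they contribute `|M| |Q|`.
When `q₁ ≠ q₂`, fixing `(m₁, m₂)` confines `q₁ / q₂` to the at most `s` roots of `Xˢ = m₁ / m₂`,
and each root comes from at most one pair of primes: since `H² < p`, an equality of fractions modulo
`p` is an equality of fractions in `ℚ`, and a fraction of two distinct primes is already in lowest
terms. So there are at most `|M| |Q| + s |M|²` quadruples, whence the image has size
`≫ min (|M| |Q|) (|Q|²)`, and Chebyshev's bound gives `|Q| ≫ H / log p`.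
-/

/-- A set of naturals in which the quotient of two distinct elements determines both of them. -/
def DistinctRatios (Q : Finset ℕ) : Prop :=
  ∀ a ∈ Q, ∀ b ∈ Q, ∀ c ∈ Q, ∀ d ∈ Q, a ≠ b → a * d = c * b → a = c ∧ b = d

lemma distinctRatios_of_prime {Q : Finset ℕ} (hQ : ∀ q ∈ Q, q.Prime) : DistinctRatios Q := by
  intro a ha b hb c hc d hd hab h
  have hac : a = c := by
    rcases (hQ a ha).dvd_mul.1 (h ▸ dvd_mul_right a d) with h1 | h1
    · exact (Nat.prime_dvd_prime_iff_eq (hQ a ha) (hQ c hc)).1 h1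
    · exact absurd ((Nat.prime_dvd_prime_iff_eq (hQ a ha) (hQ b hb)).1 h1) hab
  subst hac
  exact ⟨rfl, (Nat.eq_of_mul_eq_mul_left (hQ a ha).pos h).symm⟩

lemma chebyshev_lower {n : ℕ} (hn : 2 ≤ n) :
    (n : ℝ) / 20 ≤ (Nat.primeCounting n : ℝ) * Real.log n := by
  refine le_trans ?_ ((Chebyshev.psi_ge n).trans (Chebyshev.psi_le_primeCounting_mul_log n))
  have hn' : (2 : ℝ) ≤ n := by exact_mod_cast hn
  -- the tangent line of `log` at `2` bounds `log (n + 1)`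
  have h1 : Real.log ((n + 1 : ℝ) / 2) ≤ (n + 1 : ℝ) / 2 - 1 :=
    Real.log_le_sub_one_of_pos (by positivity)
  rw [Real.log_div (by positivity) (by norm_num)] at h1
  have h2 := Real.log_two_gt_d9
  nlinarith

lemma exists_distinctRatios {p H : ℕ} (hp : p.Prime) (hH : 0 < H) (hHp : H < p) :
    ∃ Q ⊆ Finset.Icc 1 H, DistinctRatios Q ∧ (H : ℝ) / 20 ≤ (Q.card : ℝ) * Real.log p := by
  rcases Nat.lt_or_ge H 2 with h | h
  · obtain rfl : H = 1 := by omega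
    refine ⟨{1}, by simp, ?_, ?_⟩
    · intro a ha b hb c hc d hd hab
      simp_all
    · have h1 : Real.log 2 ≤ Real.log p :=
        Real.log_le_log (by norm_num) (by exact_mod_cast hp.two_le)
      have h2 := Real.log_two_gt_d9
      norm_num
      linarith
  · refine ⟨Nat.primesLE H, ?_, distinctRatios_of_prime fun q hq ↦ ?_, ?_⟩
    · intro q hq
      rw [Nat.mem_primesLE] at hq
      exact Finset.mem_Icc.2 ⟨hq.2.one_le, hq.1⟩
    · exact (Nat.mem_primesLE.1 hq).2
    · rw [Nat.primesLE_card_eq_primeCounting]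
      refine (chebyshev_lower h).trans ?_
      gcongr

/-- Cauchy-Schwarz: a map with few collisions has a large image. -/
lemma card_sq_le_card_image_mul {α β : Type*} [DecidableEq α] [DecidableEq β]
    (A : Finset α) (f : α → β) :
    A.card ^ 2 ≤ (A.image f).card *
      ((A ×ˢ A).filter fun x ↦ f x.1 = f x.2).card := by
  have h1 : A.card = ∑ t ∈ A.image f, (A.filter fun a ↦ f a = t).card :=
    Finset.card_eq_sum_card_image f A
  have h2 : ((A ×ˢ A).filter fun x ↦ f x.1 = f x.2).card
      = ∑ t ∈ A.image f, (A.filter fun a ↦ f a = t).card ^ 2 := by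
    rw [Finset.card_eq_sum_card_fiberwise (f := fun x ↦ f x.1) (t := A.image f)]
    · refine Finset.sum_congr rfl fun t _ ↦ ?_
      rw [sq, ← Finset.card_product]
      congr 1
      ext x
      simp only [Finset.mem_filter, Finset.mem_product]
      grind
    · intro x hx
      have hx' := (Finset.mem_filter.1 hx).1
      exact Finset.mem_image_of_mem _ (Finset.mem_product.1 hx').1
  rw [h2]
  conv_lhs => rw [h1]
  exact sq_sum_le_card_mul_sum_sq

/-- Collisions with `q₁ ≠ q₂` and fixed `(m₁, m₂)` inject, through `q₁ / q₂`, into the `s`-th roots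
of `m₁ / m₂`. -/
lemma card_fibre_le {p s H : ℕ} [Fact p.Prime] (hs : 0 < s) {Q : Finset ℕ}
    (hQH : Q ⊆ Finset.Icc 1 H) (hQ : DistinctRatios Q) (hH : H * H < p)
    {m n : ZMod p} (hn : n ≠ 0) :
    ((Q ×ˢ Q).filter fun x ↦ x.1 ≠ x.2 ∧
      m * ((x.1 : ZMod p)⁻¹) ^ s = n * ((x.2 : ZMod p)⁻¹) ^ s).card ≤ s := by
  have hlt : ∀ a ∈ Q, ∀ b ∈ Q, a * b < p := fun a ha b hb ↦
    (Nat.mul_le_mul (Finset.mem_Icc.1 (hQH ha)).2 (Finset.mem_Icc.1 (hQH hb)).2).trans_lt hH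
  have hne : ∀ a ∈ Q, (a : ZMod p) ≠ 0 := by
    intro a ha h0
    have h1 := (Finset.mem_Icc.1 (hQH ha)).1
    have h2 := Nat.le_of_dvd h1 ((ZMod.natCast_eq_zero_iff a p).1 h0)
    nlinarith [hlt a ha a ha]
  calc _ ≤ (Polynomial.nthRoots s (m / n)).toFinset.card := by
        refine Finset.card_le_card_of_injOn (fun x ↦ (x.1 : ZMod p) / x.2) ?_ ?_
        · rintro ⟨a, b⟩ hx
          simp only [Finset.coe_filter, Finset.mem_product, Set.mem_ofPred_eq] at hx
          obtain ⟨⟨ha, hb⟩, -, h⟩ := hx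
          have ha' := hne a ha
          have hb' := hne b hb
          simp only [Finset.mem_coe, Multiset.mem_toFinset, Polynomial.mem_nthRoots hs]
          rw [inv_pow, inv_pow] at h
          rw [div_pow]
          field_simp at h ⊢
          linear_combination -h
        · rintro ⟨a, b⟩ hx ⟨c, d⟩ hy h
          simp only [Finset.coe_filter, Finset.mem_product, Set.mem_ofPred_eq] at hx hy
          obtain ⟨⟨ha, hb⟩, hab, -⟩ := hx
          obtain ⟨⟨hc, hd⟩, -, -⟩ := hy
          simp only at h
          rw [div_eq_div_iff (hne b hb) (hne d hd)] at h
          -- both sides are below `p`, so the congruence is an equality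
          have h' : a * d = c * b := by
            have := (ZMod.natCast_eq_natCast_iff' (a * d) (c * b) p).1 (by exact_mod_cast h)
            rwa [Nat.mod_eq_of_lt (hlt a ha d hd), Nat.mod_eq_of_lt (hlt c hc b hb)] at this
          obtain ⟨rfl, rfl⟩ := hQ a ha b hb c hc d hd hab h'
          rfl
    _ ≤ _ := (Multiset.toFinset_card_le _).trans (Polynomial.card_nthRoots s _)

lemma card_collisions_le {p s H : ℕ} [Fact p.Prime] (hs : 0 < s) {Q : Finset ℕ}
    (hQH : Q ⊆ Finset.Icc 1 H) (hQ : DistinctRatios Q) (hH : H * H < p)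
    {M : Finset (ZMod p)} (hM : ∀ m ∈ M, m ≠ 0) :
    (((M ×ˢ Q) ×ˢ (M ×ˢ Q)).filter fun x ↦
      x.1.1 * ((x.1.2 : ZMod p)⁻¹) ^ s = x.2.1 * ((x.2.2 : ZMod p)⁻¹) ^ s).card
      ≤ M.card * Q.card + s * M.card ^ 2 := by
  rw [← Finset.card_filter_add_card_filter_not (fun x ↦ x.1.2 = x.2.2)]
  refine Nat.add_le_add ?_ ?_
  · rw [← Finset.card_product]
    refine Finset.card_le_card_of_injOn Prod.fst ?_ ?_
    · intro x hx
      simp only [Finset.coe_filter, Finset.mem_filter, Finset.mem_product, Set.mem_ofPred_eq] at hx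
      simpa using hx.1.1.1
    · rintro ⟨⟨m, a⟩, n, b⟩ hx ⟨⟨m', a'⟩, n', b'⟩ hy h
      simp only [Finset.coe_filter, Finset.mem_filter, Finset.mem_product,
        Set.mem_ofPred_eq] at hx hy
      obtain ⟨⟨⟨⟨hm, ha⟩, hn, hb⟩, h1⟩, rfl⟩ := hx
      obtain ⟨⟨⟨⟨hm', ha'⟩, hn', hb'⟩, h2⟩, rfl⟩ := hy
      simp only [Prod.mk.injEq] at h
      obtain ⟨rfl, rfl⟩ := h
      have hne : ((a : ZMod p)⁻¹) ^ s ≠ 0 := by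
        refine pow_ne_zero _ (inv_ne_zero fun h0 ↦ ?_)
        have h3 := Finset.mem_Icc.1 (hQH ha)
        have h4 := Nat.le_of_dvd h3.1 ((ZMod.natCast_eq_zero_iff a p).1 h0)
        nlinarith
      rw [← mul_right_cancel₀ hne h1, ← mul_right_cancel₀ hne h2]
  · rw [sq, ← Finset.card_product M M]
    refine Finset.card_le_mul_card_image_of_maps_to (f := fun x ↦ (x.1.1, x.2.1)) ?_ s ?_
    · intro x hx
      simp only [Finset.mem_filter, Finset.mem_product] at hx
      exact Finset.mem_product.2 ⟨hx.1.1.1.1, hx.1.1.2.1⟩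
    · rintro ⟨m, n⟩ hmn
      refine le_trans ?_ (card_fibre_le hs hQH hQ hH (m := m) (hM n (Finset.mem_product.1 hmn).2))
      refine Finset.card_le_card_of_injOn (fun x ↦ (x.1.2, x.2.2)) ?_ ?_
      · rintro ⟨⟨m', a⟩, n', b⟩ hx
        simp only [Finset.coe_filter, Finset.mem_filter, Finset.mem_product, Set.mem_ofPred_eq,
          Prod.mk.injEq] at hx ⊢
        obtain ⟨⟨⟨⟨⟨_, ha⟩, _, hb⟩, h1⟩, h2⟩, rfl, rfl⟩ := hx
        exact ⟨⟨ha, hb⟩, h2, h1⟩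
      · rintro ⟨⟨m₁, a⟩, n₁, b⟩ hx ⟨⟨m₂, a'⟩, n₂, b'⟩ hy h
        simp only [Finset.coe_filter, Set.mem_ofPred_eq, Prod.mk.injEq] at hx hy h
        obtain ⟨-, rfl, rfl⟩ := hx
        obtain ⟨-, rfl, rfl⟩ := hy
        obtain ⟨rfl, rfl⟩ := h
        rfl


/-- Lower bound for the cardinality of the product set `M · H^{-s} mod p`:
`|M·H^{-s}| ≫ min(MH/log p, H²/log² p)` when `M, H < p^{1/2}`. -/
theorem product_small_interval (s : ℕ) (hs : 0 < s) :
    ∃ c : ℝ, 0 < c ∧ ∀ p : ℕ, p.Prime →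
      ∀ M : Finset (ZMod p), (∀ m ∈ M, m ≠ 0) → (M.card : ℝ) < (p : ℝ) ^ ((1 : ℝ) / 2) →
      ∀ H : ℕ, 0 < H → (H : ℝ) < (p : ℝ) ^ ((1 : ℝ) / 2) →
        c * min ((M.card : ℝ) * H / Real.log p) ((H : ℝ) ^ 2 / (Real.log p) ^ 2)
          ≤ ((Finset.image₂ (fun (m : ZMod p) (h : ℕ) => m * ((h : ZMod p)⁻¹) ^ s)
              M (Finset.Icc 1 H)).card : ℝ) := by
  have hs' : (1 : ℝ) ≤ s := by exact_mod_cast hs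
  refine ⟨1 / (800 * s), by positivity, fun p hp M hM _ H hH hHp ↦ ?_⟩
  have : Fact p.Prime := ⟨hp⟩
  have hHH : H * H < p := by
    rw [← Real.sqrt_eq_rpow, Real.lt_sqrt (by positivity)] at hHp
    rw [← sq]
    exact_mod_cast hHp
  obtain ⟨Q, hQH, hQ, hQc⟩ := exists_distinctRatios hp hH (by nlinarith : H < p)
  have hL : 0 < Real.log p := Real.log_pos (by exact_mod_cast hp.one_lt)
  set T := Finset.image₂ (fun (m : ZMod p) (h : ℕ) => m * ((h : ZMod p)⁻¹) ^ s)
    M (Finset.Icc 1 H) with hT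
  have hsub : (M ×ˢ Q).image (fun x ↦ x.1 * ((x.2 : ZMod p)⁻¹) ^ s) ⊆ T := by
    intro t ht
    obtain ⟨x, hx, rfl⟩ := Finset.mem_image.1 ht
    have hx' := Finset.mem_product.1 hx
    exact Finset.mem_image₂_of_mem hx'.1 (hQH hx'.2)
  have key : (M.card * Q.card) ^ 2 ≤ T.card * (M.card * Q.card + s * M.card ^ 2) := by
    rw [← Finset.card_product]
    refine (card_sq_le_card_image_mul _ (fun x ↦ x.1 * ((x.2 : ZMod p)⁻¹) ^ s)).trans ?_
    rw [Finset.card_product]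
    exact Nat.mul_le_mul (Finset.card_le_card hsub) (card_collisions_le hs hQH hQ hHH hM)
  have keyR : ((M.card : ℝ) * Q.card) ^ 2 ≤ T.card * (M.card * Q.card + s * M.card ^ 2) := by
    exact_mod_cast key
  rcases Nat.eq_zero_or_pos M.card with h0 | hMpos
  · rw [h0]
    have : min (((0 : ℕ) : ℝ) * H / Real.log p) ((H : ℝ) ^ 2 / Real.log p ^ 2) ≤ 0 :=
      (min_le_left _ _).trans (by simp)
    exact (mul_nonpos_of_nonneg_of_nonpos (by positivity) this).trans (by positivity)
  have hM0 : (0 : ℝ) < M.card := by exact_mod_cast hMpos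
  have hH0 : (0 : ℝ) < H := by exact_mod_cast hH
  generalize (M.card : ℝ) = m at *
  generalize (T.card : ℝ) = t at *
  generalize (Q.card : ℝ) = n at *
  generalize (H : ℝ) = h at *
  generalize Real.log p = L at *
  generalize (s : ℝ) = σ at *
  have hr : h / L / 20 ≤ n := by
    rw [div_div, mul_comm L, ← div_div, div_le_iff₀ hL]
    exact hQc
  have hr0 : 0 < h / L := by positivity
  rw [mul_div_assoc, ← div_pow]
  generalize h / L = r at *
  have hn : 0 < n := by linarith
  have key2 : m * n ^ 2 ≤ t * (n + σ * m) := by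
    refine le_of_mul_le_mul_left ?_ hM0
    linarith
  have ht : 0 ≤ t := by
    by_contra! hneg
    have h1 : 0 < m * n ^ 2 := by positivity
    have h2 : 0 < n + σ * m := by positivity
    nlinarith
  rw [div_mul_eq_mul_div, one_mul, div_le_iff₀ (by positivity)]
  -- the diagonal dominates the collision count when `σ * m ≤ n`
  rcases le_total (σ * m) n with hc | hc
  · refine (min_le_left _ _).trans ?_
    have h1 : m * n ≤ 2 * t := by
      refine le_of_mul_le_mul_right ?_ hn
      nlinarith
    have h2 : m * r ≤ m * (20 * n) := by gcongr; linarith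
    nlinarith
  · refine (min_le_right _ _).trans ?_
    have h1 : n ^ 2 ≤ 2 * σ * t := by
      refine le_of_mul_le_mul_left ?_ hM0
      nlinarith
    have h2 : r ^ 2 ≤ (20 * n) ^ 2 := by gcongr; linarith
    nlinarith
end

section
/- Let s be a positive integer, p a prime, M a subset of F_p^* with M = |M|, H a positive integer with H < p^{1/2}, and let R be the set of primes in {1, 2, ..., H}, with R = |R|. Let J be the number of quadruples (m₁, m₂, q₁, q₂) with m₁, m₂ ∈ M and q₁, q₂ ∈ R satisfying m₁·q₁^{-s} ≡ m₂·q₂^{-s} (mod p). Then J ≤ s(M² + MR). -/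
/-!
A solution with `q₁ = q₂` has `m₁ = m₂`, so there are at most `M R` of these.  For a solution with
`q₁ ≠ q₂`, the ratio `u = q₂ / q₁` in `F_p` satisfies `u ^ s = m₂ / m₁`, so for given `(m₁, m₂)` it
takes at most `s` values.  The ratio determines the pair of distinct primes: an equality of ratios
`q₂ / q₁ = r₂ / r₁` gives `q₂ r₁ ≡ r₂ q₁ (mod p)`, and both products are at most `H² < p`, so they
agree as integers and unique factorization applies (`primes_eq_of_ratio_eq`).  Hence there are at
most `s M²` solutions with `q₁ ≠ q₂`, and `J ≤ s M² + M R`.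
-/

/-- A pair of distinct primes of size below `√p` is determined by its ratio modulo `p`
(the equality of ratios being written with cross-multiplied denominators). -/
lemma primes_eq_of_ratio_eq {p H a b c d : ℕ} (hH : H * H < p)
    (ha : a.Prime) (hb : b.Prime) (hc : c.Prime)
    (haH : a ≤ H) (hbH : b ≤ H) (hcH : c ≤ H) (hdH : d ≤ H)
    (hab : a ≠ b) (h : (b : ZMod p) * c = d * a) : a = c ∧ b = d := by
  have h1 : b * c < p := (Nat.mul_le_mul hbH hcH).trans_lt hH
  have h2 : d * a < p := (Nat.mul_le_mul hdH haH).trans_lt hH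
  have h3 : b * c = d * a := by
    have h4 : ((b * c : ℕ) : ZMod p) = ((d * a : ℕ) : ZMod p) := by
      push_cast
      exact h
    rw [ZMod.natCast_eq_natCast_iff] at h4
    exact Nat.ModEq.eq_of_lt_of_lt h4 h1 h2
  have h5 : a ∣ b * c := h3 ▸ Dvd.intro_left d rfl
  have hac : a = c := by
    rcases ha.dvd_mul.1 h5 with h6 | h6
    · exact absurd ((Nat.prime_dvd_prime_iff_eq ha hb).1 h6) hab
    · exact (Nat.prime_dvd_prime_iff_eq ha hc).1 h6
  subst hac
  exact ⟨rfl, Nat.eq_of_mul_eq_mul_right ha.pos h3⟩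

/-- The number `J` of solutions of `m₁ q₁^{-s} ≡ m₂ q₂^{-s} (mod p)` with `m_i ∈ M` and
`q_i` prime, `q_i ≤ H < p^{1/2}`, satisfies `J ≤ s(M² + MR)` where `R` is the number of
primes up to `H`. -/
theorem count_J (s : ℕ) (hs : 0 < s) (p : ℕ) (hp : p.Prime)
    (M : Finset (ZMod p)) (hM : ∀ m ∈ M, m ≠ 0)
    (H : ℕ) (hH : 0 < H) (hHp : (H : ℝ) < (p : ℝ) ^ ((1 : ℝ) / 2)) :
    (((M ×ˢ M) ×ˢ
        (((Finset.Icc 1 H).filter Nat.Prime) ×ˢ ((Finset.Icc 1 H).filter Nat.Prime))).filter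
      (fun q => q.1.1 * ((q.2.1 : ZMod p)⁻¹) ^ s = q.1.2 * ((q.2.2 : ZMod p)⁻¹) ^ s)).card
      ≤ s * (M.card ^ 2 + M.card * ((Finset.Icc 1 H).filter Nat.Prime).card) := by
  classical
  have : Fact p.Prime := ⟨hp⟩
  have hHH : H * H < p := by
    rw [← Real.sqrt_eq_rpow, Real.lt_sqrt (by positivity)] at hHp
    have : H ^ 2 < p := by exact_mod_cast hHp
    nlinarith
  set R := (Finset.Icc 1 H).filter Nat.Prime with hR
  have hRm : ∀ q ∈ R, q.Prime ∧ q ≤ H := by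
    intro q hq
    simp only [hR, Finset.mem_filter, Finset.mem_Icc] at hq
    exact ⟨hq.2, hq.1.2⟩
  have hR0 : ∀ q ∈ R, (q : ZMod p) ≠ 0 := by
    intro q hq h0
    obtain ⟨hq1, hq2⟩ := hRm q hq
    rw [ZMod.natCast_eq_zero_iff] at h0
    have := Nat.le_of_dvd hq1.pos h0
    nlinarith
  set J := ((M ×ˢ M) ×ˢ (R ×ˢ R)).filter
      (fun q => q.1.1 * ((q.2.1 : ZMod p)⁻¹) ^ s = q.1.2 * ((q.2.2 : ZMod p)⁻¹) ^ s) with hJ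
  have hJm : ∀ x ∈ J, x.1.1 ∈ M ∧ x.1.2 ∈ M ∧ x.2.1 ∈ R ∧ x.2.2 ∈ R ∧
      x.1.1 * ((x.2.1 : ZMod p)⁻¹) ^ s = x.1.2 * ((x.2.2 : ZMod p)⁻¹) ^ s := by
    intro x hx
    simp only [hJ, Finset.mem_filter, Finset.mem_product] at hx
    tauto
  have hdiag : (J.filter (fun x => x.2.1 = x.2.2)).card ≤ M.card * R.card := by
    have hm : ∀ x ∈ J.filter (fun x => x.2.1 = x.2.2), x.1.1 = x.1.2 ∧ x.2.1 = x.2.2 := by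
      intro x hx
      rw [Finset.mem_filter] at hx
      obtain ⟨-, -, -, h4, h5⟩ := hJm x hx.1
      rw [hx.2] at h5
      exact ⟨mul_right_cancel₀ (pow_ne_zero s (inv_ne_zero (hR0 _ h4))) h5, hx.2⟩
    rw [← Finset.card_product]
    refine Finset.card_le_card_of_injOn (fun x => (x.1.1, x.2.1)) ?_ ?_
    · intro x hx
      obtain ⟨h1, -, h3, -⟩ := hJm x (Finset.mem_filter.1 hx).1
      exact Finset.mem_coe.2 (Finset.mem_product.2 ⟨h1, h3⟩)
    · rintro ⟨⟨a, b⟩, c, d⟩ hx ⟨⟨a', b'⟩, c', d'⟩ hy hxy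
      have h1 := hm _ hx
      have h2 := hm _ hy
      simp only [Prod.mk.injEq] at h1 h2 hxy ⊢
      obtain ⟨rfl, rfl⟩ := h1
      obtain ⟨rfl, rfl⟩ := h2
      tauto
  have hoff : (J.filter (fun x => ¬ x.2.1 = x.2.2)).card ≤ s * (M ×ˢ M).card := by
    refine Finset.card_le_mul_card_image_of_maps_to (f := fun x => x.1) ?_ s ?_
    · intro x hx
      obtain ⟨h1, h2, -⟩ := hJm x (Finset.mem_filter.1 hx).1
      exact Finset.mem_product.2 ⟨h1, h2⟩
    · rintro ⟨m, n⟩ hmn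
      -- The ratio `q₂ / q₁` embeds the fibre over `(m, n)` into the `s`-th roots of `n / m`.
      refine le_trans (Finset.card_le_card_of_injOn
        (t := (Polynomial.nthRoots s (n / m)).toFinset)
        (fun x => (x.2.2 : ZMod p) / (x.2.1 : ZMod p)) ?_ ?_)
        ((Multiset.toFinset_card_le _).trans (Polynomial.card_nthRoots _ _))
      · rintro ⟨⟨a, b⟩, c, d⟩ hx
        simp only [Finset.coe_filter, Set.mem_ofPred_eq, Finset.mem_filter, Prod.mk.injEq] at hx
        obtain ⟨⟨hx, -⟩, rfl, rfl⟩ := hx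
        obtain ⟨h1, h2, h3, h4, h5⟩ := hJm _ hx
        have ha := hM _ h1
        have hc := hR0 _ h3
        have hd := hR0 _ h4
        simp only at ha hc hd h5
        simp only [Finset.mem_coe, Multiset.mem_toFinset]
        rw [Polynomial.mem_nthRoots hs, div_pow, div_eq_div_iff (pow_ne_zero s hc) ha]
        rw [inv_pow, inv_pow, ← div_eq_mul_inv, ← div_eq_mul_inv,
          div_eq_div_iff (pow_ne_zero s hc) (pow_ne_zero s hd)] at h5
        linear_combination h5
      · rintro ⟨⟨a, b⟩, c, d⟩ hx ⟨⟨a', b'⟩, c', d'⟩ hy hxy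
        simp only [Finset.coe_filter, Set.mem_ofPred_eq, Finset.mem_filter, Prod.mk.injEq] at hx hy
        obtain ⟨⟨hx, hne⟩, rfl, rfl⟩ := hx
        obtain ⟨⟨hy, -⟩, rfl, rfl⟩ := hy
        obtain ⟨-, -, h3, h4, -⟩ := hJm _ hx
        obtain ⟨-, -, k3, k4, -⟩ := hJm _ hy
        have hxy' : (d : ZMod p) / c = d' / c' := hxy
        rw [div_eq_div_iff (hR0 _ h3) (hR0 _ k3)] at hxy'
        obtain ⟨rfl, rfl⟩ := primes_eq_of_ratio_eq hHH (hRm _ h3).1 (hRm _ h4).1 (hRm _ k3).1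
          (hRm _ h3).2 (hRm _ h4).2 (hRm _ k3).2 (hRm _ k4).2 hne hxy'
        rfl
  rw [← Finset.card_filter_add_card_filter_not (s := J) (fun x => x.2.1 = x.2.2)]
  rw [Finset.card_product] at hoff
  calc _ ≤ M.card * R.card + s * (M.card * M.card) := add_le_add hdiag hoff
    _ ≤ s * (M.card * R.card) + s * (M.card * M.card) :=
        Nat.add_le_add_right (Nat.le_mul_of_pos_left _ hs) _
    _ = s * (M.card ^ 2 + M.card * R.card) := by ring
end

section
/- For every fixed ε > 0 there exists p₀ such that for every prime p > p₀ the following holds: with N = ⌊√((π²/12 + ε)·p)⌋, every integer λ can be represented in the form m₁·x₁^{-1} + m₂·x₂^{-1} ≡ λ (mod p) with integers 1 ≤ m₁, m₂, x₁, x₂ ≤ N. -/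
/-!
Let `R ⊆ 𝔽_p` be the set of ratios `m / x` with `1 ≤ m, x ≤ M`. If `2 |R| > p`, then `R` and
`lam - R` meet by pigeonhole, so every residue is a sum of two elements of `R`.

To bound `|R|` from below, suppose `M² < p`. Coprime pairs `(m, x)` in `[1, M]²` then give
distinct ratios: `m x' ≡ m' x (mod p)` forces `m x' = m' x` since both sides lie in `[0, p)`, and
coprimality gives `(m, x) = (m', x')`. Hence `|R|` is at least the number of coprime pairs in
`[1, M]²`, which is `∑ d, μ(d) ⌊M / d⌋² ∼ M² / ζ(2) = (6 / π²) M²` by Möbius inversion and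
dominated convergence (`tendsto_coprimePairs`).

With `M = ⌊√(c p)⌋` and `c > π² / 12`, this count divided by `p` tends to `6 c / π² > 1 / 2`.
Since the claim gets weaker as `ε` grows, `ε` may be decreased to at most `1 / 8`, which makes
`c < 1` and so `M² < p`.
-/

open Filter Topology Finset

/-- The coprime pairs of integers in `[1, N]²`. -/
def coprimePairs (N : ℕ) : Finset (ℕ × ℕ) :=
  (Icc 1 N ×ˢ Icc 1 N).filter fun a => Nat.Coprime a.1 a.2

lemma card_multiples_Icc (N d : ℕ) : #{a ∈ Icc 1 N | d ∣ a} = N / d :=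
  Nat.Ioc_filter_dvd_card_eq_div N d

lemma sum_moebius_divisors (n : ℕ) :
    ∑ d ∈ n.divisors, ArithmeticFunction.moebius d = if n = 1 then 1 else 0 := by
  rw [← ArithmeticFunction.coe_mul_zeta_apply, ArithmeticFunction.moebius_mul_coe_zeta,
    ArithmeticFunction.one_apply]

/-- Möbius inversion: `[gcd(a, b) = 1] = ∑ μ(d)` over the common divisors `d` of `a` and `b`. -/
lemma card_coprimePairs (N : ℕ) :
    (#(coprimePairs N) : ℤ) =
      ∑ d ∈ Icc 1 N, ArithmeticFunction.moebius d * ((N / d : ℕ) : ℤ) ^ 2 := by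
  have h1 : ∀ a ∈ Icc 1 N ×ˢ Icc 1 N, (if Nat.Coprime a.1 a.2 then (1 : ℤ) else 0) =
      ∑ d ∈ Icc 1 N, if d ∣ a.1 ∧ d ∣ a.2 then ArithmeticFunction.moebius d else 0 := by
    intro a ha
    simp only [mem_product, mem_Icc] at ha
    rw [← sum_filter]
    have := sum_moebius_divisors (Nat.gcd a.1 a.2)
    simp only [Nat.coprime_iff_gcd_eq_one]
    rw [← this]
    refine sum_congr ?_ fun _ _ => rfl
    ext d
    simp only [Nat.mem_divisors, mem_filter, mem_Icc, Nat.dvd_gcd_iff]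
    constructor
    · rintro ⟨⟨h1, h2⟩, -⟩
      have := Nat.le_of_dvd (by omega) h1
      have := Nat.pos_of_dvd_of_pos h1 (by omega)
      exact ⟨by omega, h1, h2⟩
    · rintro ⟨-, h1, h2⟩
      exact ⟨⟨h1, h2⟩, (Nat.gcd_pos_of_pos_left _ (by omega)).ne'⟩
  rw [coprimePairs, card_filter]
  simp only [Nat.cast_sum, Nat.cast_ite, Nat.cast_one, Nat.cast_zero]
  rw [sum_congr rfl h1, sum_comm]
  refine sum_congr rfl fun d _ => ?_
  rw [← sum_filter, sum_const, filter_product (fun a => d ∣ a) (fun a => d ∣ a), card_product,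
    card_multiples_Icc]
  simp only [nsmul_eq_mul, Nat.cast_mul]
  ring

/-- The value `1 / ζ(2)` of the Dirichlet series of `μ`. -/
lemma tsum_moebius_div_sq :
    ∑' d : ℕ, (ArithmeticFunction.moebius d : ℝ) / (d : ℝ) ^ 2 = 6 / Real.pi ^ 2 := by
  have h := ArithmeticFunction.LSeries_zeta_mul_Lseries_moebius (s := 2) (by norm_num)
  rw [ArithmeticFunction.LSeries_zeta_eq_riemannZeta (by norm_num), riemannZeta_two] at h
  have h2 : LSeries (fun n => ((ArithmeticFunction.moebius n : ℤ) : ℂ)) 2 =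
      ((∑' d : ℕ, (ArithmeticFunction.moebius d : ℝ) / (d : ℝ) ^ 2 : ℝ) : ℂ) := by
    rw [LSeries, Complex.ofReal_tsum]
    refine tsum_congr fun d => ?_
    rcases eq_or_ne d 0 with rfl | hd
    · simp
    · rw [LSeries.term_of_ne_zero hd]
      push_cast
      norm_cast
  rw [h2] at h
  have h3 : Real.pi ^ 2 / 6 *
      (∑' d : ℕ, (ArithmeticFunction.moebius d : ℝ) / (d : ℝ) ^ 2) = 1 := by
    exact_mod_cast h
  have := Real.pi_pos
  field_simp at h3 ⊢
  linarith

/-- The density of coprime pairs is `1 / ζ(2)`; the terms of the Möbius sum for the count are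
dominated by `1 / d²`. -/
lemma tendsto_coprimePairs :
    Tendsto (fun N : ℕ => (#(coprimePairs N) : ℝ) / (N : ℝ) ^ 2) atTop
      (𝓝 (6 / Real.pi ^ 2)) := by
  have key : ∀ N : ℕ, (#(coprimePairs N) : ℝ) / (N : ℝ) ^ 2 =
      ∑' d : ℕ, (ArithmeticFunction.moebius d : ℝ) * (((N / d : ℕ) : ℝ) / N) ^ 2 := by
    intro N
    rw [tsum_eq_sum (s := Icc 1 N)]
    · have : (#(coprimePairs N) : ℝ) =
          ∑ d ∈ Icc 1 N, (ArithmeticFunction.moebius d : ℝ) * ((N / d : ℕ) : ℝ) ^ 2 := by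
        have h := congrArg (Int.cast : ℤ → ℝ) (card_coprimePairs N)
        simpa only [Int.cast_sum, Int.cast_mul, Int.cast_pow, Int.cast_natCast] using h
      rw [this, sum_div]
      refine sum_congr rfl fun d _ => ?_
      rw [div_pow, mul_div_assoc]
    · intro d hd
      have : N / d = 0 := by
        rw [Nat.div_eq_zero_iff]
        simp only [mem_Icc] at hd
        omega
      simp [this]
  simp_rw [key]
  rw [← tsum_moebius_div_sq]
  refine tendsto_tsum_of_dominated_convergence (bound := fun d : ℕ => 1 / (d : ℝ) ^ 2)
    (Real.summable_one_div_nat_pow.mpr (by norm_num)) ?_ ?_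
  · intro d
    have h := ((tendsto_nat_floor_mul_div_atTop (R := ℝ) (a := 1 / (d : ℝ))
      (by positivity)).comp (tendsto_natCast_atTop_atTop (R := ℝ))).pow 2
    have h := h.const_mul (ArithmeticFunction.moebius d : ℝ)
    convert h using 2 with N
    · simp only [Function.comp]
      rw [one_div_mul_eq_div, Nat.floor_div_eq_div]
    · rw [one_div_pow, mul_one_div]
  · refine Eventually.of_forall fun N d => ?_
    rw [norm_mul, norm_pow, Real.norm_eq_abs, Real.norm_eq_abs]
    have h1 : |(ArithmeticFunction.moebius d : ℝ)| ≤ 1 := by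
      exact_mod_cast ArithmeticFunction.abs_moebius_le_one (n := d)
    have h2 : |((N / d : ℕ) : ℝ) / N| ≤ 1 / d := by
      rw [abs_of_nonneg (by positivity)]
      rcases Nat.eq_zero_or_pos N with rfl | hN
      · simp
      · rw [div_le_iff₀ (by positivity), one_div_mul_eq_div]
        exact Nat.cast_div_le
    calc _ ≤ 1 * (1 / (d : ℝ)) ^ 2 := by gcongr
      _ = _ := by rw [one_mul, one_div_pow]

/-- Coprime pairs in a box of area less than `p` have distinct ratios modulo `p`. -/
lemma ratio_injOn {p M : ℕ} [Fact p.Prime] (hM : M ^ 2 < p) :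
    Set.InjOn (fun a : ℕ × ℕ => (a.1 : ZMod p) * (a.2 : ZMod p)⁻¹) (coprimePairs M) := by
  have hne : ∀ x : ℕ, 1 ≤ x → x ≤ M → (x : ZMod p) ≠ 0 := by
    intro x h1 h2 h
    rw [ZMod.natCast_eq_zero_iff] at h
    have := Nat.le_of_dvd h1 h
    nlinarith
  rintro ⟨a, b⟩ hab ⟨c, d⟩ hcd h
  simp only [coprimePairs, coe_filter, mem_product, mem_Icc, Set.mem_ofPred_eq] at hab hcd h
  obtain ⟨⟨⟨ha1, ha2⟩, hb1, hb2⟩, hab⟩ := hab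
  obtain ⟨⟨⟨hc1, hc2⟩, hd1, hd2⟩, hcd⟩ := hcd
  have hb := hne b hb1 hb2
  have hd := hne d hd1 hd2
  have h1 : ((a * d : ℕ) : ZMod p) = ((c * b : ℕ) : ZMod p) := by
    push_cast
    field_simp at h
    linear_combination h
  rw [ZMod.natCast_eq_natCast_iff] at h1
  have h2 : a * d = c * b := h1.eq_of_lt_of_lt (by nlinarith) (by nlinarith)
  have hac : a = c := Nat.dvd_antisymm
    (hab.dvd_of_dvd_mul_right (Dvd.intro _ h2)) (hcd.dvd_of_dvd_mul_right (Dvd.intro _ h2.symm))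
  subst hac
  rw [Nat.eq_of_mul_eq_mul_left (by omega) h2]

/-- A set containing more than half of a finite group is an additive basis of order two. -/
lemma exists_add_eq_of_card {G : Type*} [AddCommGroup G] [Fintype G] [DecidableEq G]
    (R : Finset G) (hR : Fintype.card G < 2 * #R) (g : G) : ∃ r ∈ R, ∃ s ∈ R, r + s = g := by
  have h : #(R.image fun r => g - r) = #R := card_image_of_injective _ sub_right_injective
  obtain ⟨r, hr⟩ := inter_nonempty_of_card_lt_card_add_card (subset_univ R)
    (subset_univ (R.image fun r => g - r)) (by rw [h, card_univ]; omega)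
  rw [mem_inter, mem_image] at hr
  obtain ⟨h1, s, hs, rfl⟩ := hr
  exact ⟨_, h1, s, hs, by abel⟩

/-- With `N = ⌊√(c p)⌋`, more than `p / 2` pairs are coprime for large `p`, because
`#(coprimePairs N) / p = (#(coprimePairs N) / N²) (N / √(c p))² c` tends to `6 c / π² > 1 / 2`. -/
lemma eventually_many_coprimePairs {c : ℝ} (hc : Real.pi ^ 2 / 12 < c) :
    ∀ᶠ p : ℕ in atTop, p < 2 * #(coprimePairs ⌊Real.sqrt (c * p)⌋₊) := by
  have hpi := Real.pi_pos
  have hc0 : 0 < c := lt_trans (by positivity) hc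
  have hs : Tendsto (fun p : ℕ => Real.sqrt (c * p)) atTop atTop :=
    Real.tendsto_sqrt_atTop.comp (tendsto_natCast_atTop_atTop.const_mul_atTop hc0)
  have h1 := tendsto_coprimePairs.comp (tendsto_nat_floor_atTop.comp hs)
  have h2 := ((tendsto_nat_floor_div_atTop (R := ℝ)).comp hs).pow 2
  have h3 := (h1.mul h2).mul_const c
  have hlim : 1 / 2 < 6 / Real.pi ^ 2 * 1 ^ 2 * c := by
    rw [one_pow, mul_one, div_mul_eq_mul_div, lt_div_iff₀ (by positivity)]
    linarith
  have hfl : Tendsto (fun p : ℕ => ⌊Real.sqrt (c * p)⌋₊) atTop atTop :=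
    tendsto_nat_floor_atTop.comp hs
  filter_upwards [h3.eventually_const_lt hlim, eventually_gt_atTop 0,
    hfl.eventually_gt_atTop 0] with p hp hp0 hf
  simp only [Function.comp] at hp
  have hp0' : (0 : ℝ) < p := by exact_mod_cast hp0
  have hf' : (0 : ℝ) < ⌊Real.sqrt (c * p)⌋₊ := by exact_mod_cast hf
  rw [div_pow, Real.sq_sqrt (by positivity), div_mul_div_cancel₀ (by positivity),
    div_mul_eq_mul_div, mul_comm _ c, mul_div_mul_left _ _ hc0.ne',
    lt_div_iff₀ hp0'] at hp
  have : (p : ℝ) < 2 * #(coprimePairs ⌊Real.sqrt (c * p)⌋₊) := by linarith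
  exact_mod_cast this

/-- For `p` large and `N = ⌊√((π²/12 + ε)p)⌋`, every `λ` is representable as
`m₁/x₁ + m₂/x₂ mod p` with `1 ≤ m₁, m₂, x₁, x₂ ≤ N`. -/
theorem two_ratios_of_intervals_from_origin (ε : ℝ) (hε : 0 < ε) :
    ∃ p₀ : ℕ, ∀ p : ℕ, p.Prime → p₀ < p →
      ∀ N : ℕ, N = ⌊Real.sqrt ((Real.pi ^ 2 / 12 + ε) * p)⌋₊ →
      ∀ lam : ℤ, ∃ m₁ m₂ x₁ x₂ : ℕ,
        (1 ≤ m₁ ∧ m₁ ≤ N) ∧ (1 ≤ m₂ ∧ m₂ ≤ N) ∧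
        (1 ≤ x₁ ∧ x₁ ≤ N) ∧ (1 ≤ x₂ ∧ x₂ ≤ N) ∧
        (m₁ : ZMod p) * (x₁ : ZMod p)⁻¹ + (m₂ : ZMod p) * (x₂ : ZMod p)⁻¹
          = (lam : ZMod p) := by
  set c : ℝ := Real.pi ^ 2 / 12 + min ε (1 / 8) with hc
  have hmin : 0 < min ε (1 / 8) := lt_min hε (by norm_num)
  have hc_lt : c < 1 := by
    have h1 := Real.pi_lt_d2
    have h2 := Real.pi_pos
    have h3 : min ε (1 / 8) ≤ 1 / 8 := min_le_right _ _
    nlinarith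
  obtain ⟨p₀, hp₀⟩ := eventually_atTop.mp
    (eventually_many_coprimePairs (c := c) (by linarith))
  refine ⟨p₀, fun p hp hpp N hN lam => ?_⟩
  have : Fact p.Prime := ⟨hp⟩
  have hcard := hp₀ p hpp.le
  set M := ⌊Real.sqrt (c * p)⌋₊ with hM
  have hMN : M ≤ N := by
    rw [hN]
    refine Nat.floor_le_floor (Real.sqrt_le_sqrt ?_)
    rw [hc]
    gcongr
    exact min_le_left ε (1 / 8)
  have hp0 : (0 : ℝ) < p := by exact_mod_cast hp.pos
  have hc0 : 0 ≤ c := by positivity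
  have hMp : M ^ 2 < p := by
    have h1 : (M : ℝ) ≤ Real.sqrt (c * p) := Nat.floor_le (Real.sqrt_nonneg _)
    have h2 : (M : ℝ) ^ 2 ≤ c * p := by
      rw [← Real.sq_sqrt (show 0 ≤ c * p by positivity)]
      gcongr
    have h3 : (M : ℝ) ^ 2 < p := by nlinarith
    exact_mod_cast h3
  have hR := card_image_of_injOn (ratio_injOn hMp)
  obtain ⟨r, hr, s, hs, hrs⟩ := exists_add_eq_of_card _
    (by rw [hR, ZMod.card]; exact hcard) (lam : ZMod p)
  rw [mem_image] at hr hs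
  obtain ⟨⟨a, b⟩, hab, rfl⟩ := hr
  obtain ⟨⟨a', b'⟩, hab', rfl⟩ := hs
  simp only [coprimePairs, mem_filter, mem_product, mem_Icc] at hab hab'
  exact ⟨a, a', b, b', by omega, by omega, by omega, by omega, hrs⟩
end

section
/- Let p be a prime. Then the congruence m₁·x₁^{-1} + m₂·x₂^{-1} ≡ −1 (mod p) has no solutions in positive integers m₁, m₂, x₁, x₂ all strictly less than √(p/3). -/
/-! Clearing denominators, a solution makes `p` divide the positive integer
`m₁ x₂ + m₂ x₁ + x₁ x₂`. Each of the three products is less than `p / 3`, so the sum is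
less than `p`, which is a contradiction. -/

/-- The bound `n < √(p/3)` with the square root cleared. -/
lemma three_mul_sq_lt {p n : ℕ} (h : (n : ℝ) < Real.sqrt ((p : ℝ) / 3)) : 3 * n ^ 2 < p := by
  have h2 : (n : ℝ) ^ 2 < (p : ℝ) / 3 := (Real.lt_sqrt (Nat.cast_nonneg n)).1 h
  have h3 : 3 * (n : ℝ) ^ 2 < p := by linarith
  exact_mod_cast h3

lemma cast_ne_zero_of_three_mul_sq_lt {p n : ℕ} (hn : 0 < n) (h : 3 * n ^ 2 < p) :
    (n : ZMod p) ≠ 0 := by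
  rw [Ne, ZMod.natCast_eq_zero_iff]
  intro hd
  have := Nat.le_of_dvd hn hd
  nlinarith

/-- The congruence `m₁/x₁ + m₂/x₂ ≡ -1 (mod p)` has no solutions in positive integers
below `√(p/3)`. -/
theorem no_solution_minus_one (p : ℕ) (hp : p.Prime)
    (m₁ m₂ x₁ x₂ : ℕ) (hm₁ : 0 < m₁) (hm₂ : 0 < m₂) (hx₁ : 0 < x₁) (hx₂ : 0 < x₂)
    (hm₁p : (m₁ : ℝ) < Real.sqrt ((p : ℝ) / 3))
    (hm₂p : (m₂ : ℝ) < Real.sqrt ((p : ℝ) / 3))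
    (hx₁p : (x₁ : ℝ) < Real.sqrt ((p : ℝ) / 3))
    (hx₂p : (x₂ : ℝ) < Real.sqrt ((p : ℝ) / 3)) :
    (m₁ : ZMod p) * (x₁ : ZMod p)⁻¹ + (m₂ : ZMod p) * (x₂ : ZMod p)⁻¹ ≠ -1 := by
  haveI := Fact.mk hp
  intro h
  replace hm₁p := three_mul_sq_lt hm₁p
  replace hm₂p := three_mul_sq_lt hm₂p
  replace hx₁p := three_mul_sq_lt hx₁p
  replace hx₂p := three_mul_sq_lt hx₂p
  have h₁ := cast_ne_zero_of_three_mul_sq_lt hx₁ hx₁p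
  have h₂ := cast_ne_zero_of_three_mul_sq_lt hx₂ hx₂p
  have hz : ((m₁ * x₂ + m₂ * x₁ + x₁ * x₂ : ℕ) : ZMod p) = 0 := by
    push_cast
    field_simp at h
    linear_combination h
  have hle := Nat.le_of_dvd (by positivity) ((ZMod.natCast_eq_zero_iff _ _).1 hz)
  zify at *
  nlinarith [sq_nonneg ((m₁ : ℤ) - x₂), sq_nonneg ((m₂ : ℤ) - x₁), sq_nonneg ((x₁ : ℤ) - x₂)]
end

section
/- Let p be a prime. Then the congruence m₁·x₁^{-1} + m₂·x₂^{-1} ≡ 0 (mod p) has no solutions in positive integers m₁, m₂, x₁, x₂ all strictly less than √(p/2). -/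
/-!
Clearing denominators turns the congruence into `p ∣ m₁ x₂ + m₂ x₁`. Each product lies strictly
between `0` and `p / 2`, so the sum lies strictly between `0` and `p`, which is impossible.
-/

/-- The product bound behind the argument: `a, b < √(p/2)` gives `ab < p/2`. -/
theorem two_mul_mul_lt_of_lt_sqrt_half {p a b : ℕ}
    (ha : (a : ℝ) < Real.sqrt ((p : ℝ) / 2)) (hb : (b : ℝ) < Real.sqrt ((p : ℝ) / 2)) :
    2 * (a * b) < p := by
  have h : (a : ℝ) * b < (p : ℝ) / 2 := by
    rw [← Real.mul_self_sqrt (show (0 : ℝ) ≤ (p : ℝ) / 2 by positivity)]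
    exact mul_lt_mul'' ha hb (by positivity) (by positivity)
  have h' : (2 : ℝ) * (a * b) < p := by linarith
  exact_mod_cast h'

theorem natCast_zmod_ne_zero_of_lt {p n : ℕ} (hn : 0 < n) (h : n < p) : (n : ZMod p) ≠ 0 := by
  rw [Ne, ZMod.natCast_eq_zero_iff]
  exact Nat.not_dvd_of_pos_of_lt hn h

/-- The congruence `m₁/x₁ + m₂/x₂ ≡ 0 (mod p)` has no solutions in positive integers
below `√(p/2)`. -/
theorem no_solution_zero (p : ℕ) (hp : p.Prime)
    (m₁ m₂ x₁ x₂ : ℕ) (hm₁ : 0 < m₁) (hm₂ : 0 < m₂) (hx₁ : 0 < x₁) (hx₂ : 0 < x₂)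
    (hm₁p : (m₁ : ℝ) < Real.sqrt ((p : ℝ) / 2))
    (hm₂p : (m₂ : ℝ) < Real.sqrt ((p : ℝ) / 2))
    (hx₁p : (x₁ : ℝ) < Real.sqrt ((p : ℝ) / 2))
    (hx₂p : (x₂ : ℝ) < Real.sqrt ((p : ℝ) / 2)) :
    (m₁ : ZMod p) * (x₁ : ZMod p)⁻¹ + (m₂ : ZMod p) * (x₂ : ZMod p)⁻¹ ≠ 0 := by
  haveI : Fact p.Prime := ⟨hp⟩
  have h₁ := two_mul_mul_lt_of_lt_sqrt_half hm₁p hx₂p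
  have h₂ := two_mul_mul_lt_of_lt_sqrt_half hm₂p hx₁p
  have hx₁0 : (x₁ : ZMod p) ≠ 0 := natCast_zmod_ne_zero_of_lt hx₁ (by nlinarith)
  have hx₂0 : (x₂ : ZMod p) ≠ 0 := natCast_zmod_ne_zero_of_lt hx₂ (by nlinarith)
  have hsum : ((m₁ * x₂ + m₂ * x₁ : ℕ) : ZMod p) ≠ 0 :=
    natCast_zmod_ne_zero_of_lt (by positivity) (by omega)
  intro h
  apply hsum
  push_cast
  calc (m₁ : ZMod p) * x₂ + m₂ * x₁
      = (m₁ * (x₁ : ZMod p)⁻¹ + m₂ * (x₂ : ZMod p)⁻¹) * (x₁ * x₂) := by field_simp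
    _ = 0 := by rw [h, zero_mul]
end

section
/- Let ε be fixed with 0 < ε < 0.1. There exists p₀ such that for every prime p > p₀ the following holds: set Q = (log p)^{6+ε}, and suppose that for every non-principal Dirichlet character χ modulo p one has | Σ_{q ≤ Q, q prime} χ(q) | ≤ π(Q)·(log p)^{−1−0.1ε}. Then for every subset M of F_p^* with |M| = ⌊p^{1/2}⌋, and with H = ⌊p^{1/2}(log p)^{6+ε}⌋, every integer λ can be represented in the form m₁·x₁^{-1} + m₂·x₂^{-1} ≡ λ (mod p) with m₁, m₂ ∈ M and integers 1 ≤ x₁, x₂ ≤ H. -/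
/-!
Let `S` be the set of residues `m / (q * y)` with `m ∈ M`, `y` a prime at most `√p` and `q` a prime
at most `Q = (log p) ^ (6 + ε)`. Every product `q * y` is at most `H`, so by pigeonhole it suffices
to show that `S` contains more than half of the residues: then `S` meets `lam - S`.

Let `Z` be the set of nonzero residues outside `S`. Since `z * q * y / m ≠ 1` for all `z ∈ Z`,
orthogonality of characters gives
`∑ χ, (∑ q, χ q) * (∑ z ∈ Z, χ z) * (∑ m y, χ (y / m)) = 0`. The principal character contributes
the product of the sizes of the three families, the hypothesis saves a factor
`(log p) ^ (-1 - 0.1 * ε)` in the first sum for all other characters, and Cauchy-Schwarz with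
Parseval handles the other two sums (`card_mul_sq_le`). As the `y` are primes below `√p`, the family
`y / m` has multiplicative energy at most `|M| * π(√p) + |M| ^ 2 ≤ 2 * p` (`energy_le`).
Restricting `y` to primes costs a factor `log p` in the size of the family, by Chebyshev's lower
bound for `π(√p)`, and the saving from the hypothesis still wins: `|Z|` is at most
`2 * p * (log p) ^ (-0.2 * ε)`, which is below `p / 4` for large `p`.
-/

/-- Parseval's identity for Dirichlet characters modulo a prime. -/
lemma sum_norm_sq_char_sum {p : ℕ} [Fact p.Prime] {ι : Type*} [DecidableEq ι] (T : Finset ι)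
    (a : ι → ZMod p) (ha : ∀ i ∈ T, a i ≠ 0) :
    ∑ χ : DirichletCharacter ℂ p, ‖∑ i ∈ T, χ (a i)‖ ^ 2
      = ((p : ℝ) - 1) * (((T ×ˢ T).filter fun x => a x.1 = a x.2).card : ℝ) := by
  have hp : p.Prime := Fact.out
  have key : ∀ χ : DirichletCharacter ℂ p, ((‖∑ i ∈ T, χ (a i)‖ ^ 2 : ℝ) : ℂ)
      = ∑ x ∈ T ×ˢ T, χ (a x.1)⁻¹ * χ (a x.2) := by
    intro χ
    have hconj : (starRingEnd ℂ) (∑ i ∈ T, χ (a i)) = ∑ i ∈ T, χ (a i)⁻¹ := by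
      rw [map_sum]
      refine Finset.sum_congr rfl fun i _ => ?_
      rw [← MulChar.inv_apply', ← MulChar.star_apply']
      rfl
    push_cast
    rw [← Complex.conj_mul', hconj, Finset.sum_mul_sum, Finset.sum_product]
  have : ((∑ χ : DirichletCharacter ℂ p, ‖∑ i ∈ T, χ (a i)‖ ^ 2 : ℝ) : ℂ)
      = (((p : ℝ) - 1) * (((T ×ˢ T).filter fun x => a x.1 = a x.2).card : ℝ) : ℝ) := by
    rw [Complex.ofReal_sum, Finset.sum_congr rfl fun χ _ => key χ, Finset.sum_comm]
    rw [Finset.sum_congr rfl fun x hx =>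
      DirichletCharacter.sum_char_inv_mul_char_eq ℂ
        (isUnit_iff_ne_zero.mpr (ha x.1 (Finset.mem_product.mp hx).1)) (a x.2)]
    rw [← Finset.sum_filter, Finset.sum_const, Nat.totient_prime hp, nsmul_eq_mul,
      Nat.cast_sub hp.one_le]
    push_cast
    ring
  exact_mod_cast this

/-- If no product `z * q * b i` equals `1` and the character sums over `P` save a factor `δ`, then
the excluded set `Z` is small in terms of the multiplicative energy of the family `b`. -/
lemma card_mul_sq_le {p : ℕ} [Fact p.Prime] {ι : Type*} [DecidableEq ι] (T : Finset ι)
    (b : ι → ZMod p) (hb : ∀ i ∈ T, b i ≠ 0) (P : Finset ℕ) (hP : ∀ q ∈ P, (q : ZMod p) ≠ 0)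
    (hP0 : P.Nonempty) (Z : Finset (ZMod p)) (hZ : ∀ z ∈ Z, z ≠ 0) (δ : ℝ) (hδ : 0 ≤ δ)
    (hchar : ∀ χ : DirichletCharacter ℂ p, χ ≠ 1 →
      ‖∑ q ∈ P, χ (q : ZMod p)‖ ≤ (P.card : ℝ) * δ)
    (hne : ∀ z ∈ Z, ∀ q ∈ P, ∀ i ∈ T, z * (q : ZMod p) * b i ≠ 1) :
    (Z.card : ℝ) * (T.card : ℝ) ^ 2
      ≤ δ ^ 2 * (p : ℝ) ^ 2 * (((T ×ˢ T).filter fun x => b x.1 = b x.2).card : ℝ) := by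
  classical
  have hp : p.Prime := Fact.out
  set E : ℝ := (((T ×ˢ T).filter fun x => b x.1 = b x.2).card : ℝ) with hE
  have hE0 : 0 ≤ E := by positivity
  have h0 : ∑ χ : DirichletCharacter ℂ p,
      (∑ q ∈ P, χ (q : ZMod p)) * ((∑ z ∈ Z, χ z) * ∑ i ∈ T, χ (b i)) = 0 := by
    simp_rw [Finset.sum_mul, Finset.mul_sum]
    rw [Finset.sum_comm]
    refine Finset.sum_eq_zero fun q hq => ?_
    rw [Finset.sum_comm]
    refine Finset.sum_eq_zero fun z hz => ?_
    rw [Finset.sum_comm]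
    refine Finset.sum_eq_zero fun i hi => ?_
    simp only [← map_mul]
    refine DirichletCharacter.sum_characters_eq_zero ℂ ?_
    have := hne z hz q hq i hi
    rwa [← mul_assoc, mul_comm (q : ZMod p) z]
  rw [← Finset.add_sum_erase _ _ (Finset.mem_univ (1 : DirichletCharacter ℂ p))] at h0
  have hone : (∑ q ∈ P, (1 : DirichletCharacter ℂ p) (q : ZMod p)) *
      ((∑ z ∈ Z, (1 : DirichletCharacter ℂ p) z) * ∑ i ∈ T, (1 : DirichletCharacter ℂ p) (b i))
      = ((P.card * (Z.card * T.card) : ℝ) : ℂ) := by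
    rw [Finset.sum_congr rfl fun q hq => MulChar.one_apply (isUnit_iff_ne_zero.mpr (hP q hq)),
      Finset.sum_congr rfl fun q hq => MulChar.one_apply (isUnit_iff_ne_zero.mpr (hZ q hq)),
      Finset.sum_congr rfl fun q hq => MulChar.one_apply (isUnit_iff_ne_zero.mpr (hb q hq))]
    simp
  rw [hone] at h0
  have h1 : (P.card * (Z.card * T.card) : ℝ) ≤ ∑ χ : DirichletCharacter ℂ p,
      (P.card * δ) * (‖∑ z ∈ Z, χ z‖ * ‖∑ i ∈ T, χ (b i)‖) := by
    have h2 := congrArg norm (eq_neg_of_add_eq_zero_left h0)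
    rw [norm_neg, Complex.norm_real, Real.norm_of_nonneg (by positivity)] at h2
    rw [h2]
    refine (norm_sum_le _ _).trans ?_
    refine le_trans (Finset.sum_le_sum fun χ hχ => ?_)
      (Finset.sum_le_sum_of_subset_of_nonneg (Finset.erase_subset _ _) fun _ _ _ => by positivity)
    rw [norm_mul, norm_mul]
    exact mul_le_mul_of_nonneg_right (hchar χ (Finset.ne_of_mem_erase hχ)) (by positivity)
  rw [← Finset.mul_sum, mul_assoc] at h1
  have h3 := le_of_mul_le_mul_left h1 (by exact_mod_cast hP0.card_pos)
  have hCS := Finset.sum_mul_sq_le_sq_mul_sq (Finset.univ : Finset (DirichletCharacter ℂ p))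
    (fun χ => ‖∑ z ∈ Z, χ z‖) (fun χ => ‖∑ i ∈ T, χ (b i)‖)
  rw [sum_norm_sq_char_sum T b hb, sum_norm_sq_char_sum Z (fun z => z) hZ] at hCS
  have hdiag : (((Z ×ˢ Z).filter fun x => x.1 = x.2).card : ℝ) = Z.card := by
    have := Finset.diag_card Z
    rw [← this]
    congr 2
    ext x
    simp [Finset.mem_diag]
    grind
  rw [hdiag, ← hE] at hCS
  have hp1 : (1 : ℝ) ≤ p := by exact_mod_cast hp.one_le
  rcases Z.eq_empty_or_nonempty with hZe | hZn
  · subst hZe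
    simp only [Finset.card_empty, Nat.cast_zero, zero_mul]
    positivity
  have hZpos : (0 : ℝ) < Z.card := by exact_mod_cast hZn.card_pos
  refine le_of_mul_le_mul_left ?_ hZpos
  calc (Z.card : ℝ) * (Z.card * (T.card : ℝ) ^ 2) = (Z.card * T.card : ℝ) ^ 2 := by ring
    _ ≤ (δ * ∑ χ : DirichletCharacter ℂ p, ‖∑ z ∈ Z, χ z‖ * ‖∑ i ∈ T, χ (b i)‖) ^ 2 := by
        gcongr
    _ = δ ^ 2 * (∑ χ : DirichletCharacter ℂ p, ‖∑ z ∈ Z, χ z‖ * ‖∑ i ∈ T, χ (b i)‖) ^ 2 := by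
        ring
    _ ≤ δ ^ 2 * ((((p : ℝ) - 1) * Z.card) * (((p : ℝ) - 1) * E)) := by gcongr
    _ = δ ^ 2 * ((p : ℝ) - 1) ^ 2 * (Z.card * E) := by ring
    _ ≤ δ ^ 2 * (p : ℝ) ^ 2 * (Z.card * E) := by
        have : (0 : ℝ) ≤ p - 1 := by linarith
        gcongr
        linarith
    _ = _ := by ring

/-- The fractions `y / m` with `m ∈ M` and `y` a prime at most `√p` have small energy: a ratio of
two distinct primes of this size determines both of them, so off the diagonal `y = y'` a coincidence
`y / m = y' / m'` is determined by `(m, m')`. -/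
lemma energy_le {p : ℕ} [Fact p.Prime] (M : Finset (ZMod p)) (hM : ∀ m ∈ M, m ≠ 0)
    (Y : Finset ℕ) (hY : ∀ y ∈ Y, y.Prime ∧ y ≤ Nat.sqrt p) :
    (((M ×ˢ Y) ×ˢ (M ×ˢ Y)).filter fun x : (ZMod p × ℕ) × (ZMod p × ℕ) =>
      (x.1.2 : ZMod p) * x.1.1⁻¹ = (x.2.2 : ZMod p) * x.2.1⁻¹).card
      ≤ M.card * Y.card + M.card * M.card := by
  classical
  have hp : p.Prime := Fact.out
  have hsq : ∀ a ∈ Y, ∀ b ∈ Y, a * b < p := by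
    intro a ha b hb
    have h1 : a * b ≤ Nat.sqrt p * Nat.sqrt p := Nat.mul_le_mul (hY a ha).2 (hY b hb).2
    refine lt_of_le_of_ne (h1.trans (Nat.sqrt_le p)) fun h => ?_
    rw [← h] at hp
    exact Nat.not_prime_mul (hY a ha).1.ne_one (hY b hb).1.ne_one hp
  have hlt : ∀ a ∈ Y, a < p := fun a ha => by
    have := hsq a ha a ha
    nlinarith [(hY a ha).1.one_lt]
  have hcast : ∀ a b : ℕ, a < p → b < p → (a : ZMod p) = b → a = b := by
    intro a b ha hb h
    rw [ZMod.natCast_eq_natCast_iff] at h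
    exact Nat.ModEq.eq_of_lt_of_lt h ha hb
  have hne0 : ∀ a ∈ Y, (a : ZMod p) ≠ 0 := by
    intro a ha h
    have := hcast a 0 (hlt a ha) hp.pos (by simpa using h)
    exact (hY a ha).1.ne_zero this
  rw [← Finset.card_filter_add_card_filter_not (fun x => x.1.2 = x.2.2)]
  refine Nat.add_le_add ?_ ?_
  · rw [← Finset.card_product]
    refine Finset.card_le_card_of_injOn (fun x => x.1) ?_ ?_
    · intro x hx
      simp only [Finset.coe_filter, Finset.mem_filter, Finset.mem_product, Set.mem_ofPred_eq] at hx
      simp only [Finset.coe_product, Set.mem_prod, Finset.mem_coe]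
      exact hx.1.1.1
    · rintro ⟨⟨m, y⟩, ⟨m', y'⟩⟩ hx ⟨⟨n, z⟩, ⟨n', z'⟩⟩ hx' h
      simp only [Finset.coe_filter, Finset.mem_filter, Finset.mem_product, Set.mem_ofPred_eq]
        at hx hx' h
      obtain ⟨⟨⟨⟨hm, hy⟩, hm', hy'⟩, he⟩, hyy⟩ := hx
      obtain ⟨⟨⟨⟨hn, hz⟩, hn', hz'⟩, he'⟩, hzz⟩ := hx'
      simp only [Prod.mk.injEq] at h
      obtain ⟨rfl, rfl⟩ := h
      subst hyy hzz
      have h1 := mul_left_cancel₀ (hne0 _ hy) he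
      have h2 := mul_left_cancel₀ (hne0 _ hy) he'
      have h3 := inv_injective h1
      have h4 := inv_injective h2
      rw [← h3, ← h4]
  · rw [← Finset.card_product]
    refine Finset.card_le_card_of_injOn (fun x => (x.1.1, x.2.1)) ?_ ?_
    · intro x hx
      simp only [Finset.coe_filter, Finset.mem_filter, Finset.mem_product, Set.mem_ofPred_eq] at hx
      simp only [Finset.coe_product, Set.mem_prod, Finset.mem_coe]
      exact ⟨hx.1.1.1.1, hx.1.1.2.1⟩
    · rintro ⟨⟨m, y⟩, ⟨m', y'⟩⟩ hx ⟨⟨n, z⟩, ⟨n', z'⟩⟩ hx' h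
      simp only [Finset.coe_filter, Finset.mem_filter, Finset.mem_product, Set.mem_ofPred_eq]
        at hx hx' h
      obtain ⟨⟨⟨⟨hm, hy⟩, hm', hy'⟩, he⟩, hyy⟩ := hx
      obtain ⟨⟨⟨⟨hn, hz⟩, hn', hz'⟩, he'⟩, hzz⟩ := hx'
      simp only [Prod.mk.injEq] at h
      obtain ⟨rfl, rfl⟩ := h
      have hm0 := hM _ hm
      have hm0' := hM _ hm'
      have e1 : (y : ZMod p) * m' = y' * m := by field_simp at he; linear_combination he
      have e2 : (z : ZMod p) * m' = z' * m := by field_simp at he'; linear_combination he'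
      have e3 : ((y * z' : ℕ) : ZMod p) = ((z * y' : ℕ) : ZMod p) := by
        push_cast
        refine mul_right_cancel₀ (mul_ne_zero hm0 hm0') ?_
        linear_combination (z' * m : ZMod p) * e1 - (y' * m : ZMod p) * e2
      -- both products are below `p`, so the congruence is an equality of integers
      have e4 := hcast _ _ (hsq y hy z' hz') (hsq z hz y' hy') e3
      have hdvd : y ∣ z * y' := ⟨z', e4.symm⟩
      have hyz : y = z := by
        rcases (hY y hy).1.dvd_mul.mp hdvd with h | h
        · exact (Nat.prime_dvd_prime_iff_eq (hY y hy).1 (hY z hz).1).mp h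
        · exact absurd ((Nat.prime_dvd_prime_iff_eq (hY y hy).1 (hY y' hy').1).mp h) hyy
      subst hyz
      have := Nat.eq_of_mul_eq_mul_left (hY y hy).1.pos e4
      rw [this]

open Filter Topology in
/-- What the argument requires of a large modulus `x`: the fifth one turns Chebyshev's bound into
`π(√x) ≥ √x / log x`, and the last one makes the saving `(log x) ^ (-0.2 * ε)` beat the constants. -/
lemma eventually_conditions (ε : ℝ) (hε : 0 < ε) :
    ∀ᶠ x : ℝ in atTop, 5 < x ∧ 0 < Real.log x ∧ 2 ≤ Real.log x ^ (6 + ε) ∧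
      Real.log x ^ (6 + ε) < x ∧
      √x / 2 ≤ (√x - 1) * Real.log 2 - Real.log (√x + 2) ∧
      2 * Real.log x ^ (-(0.2 * ε)) ≤ 1 / 4 := by
  have hlog := Real.tendsto_log_atTop
  have e1 := ((tendsto_rpow_atTop (show 0 < 6 + ε by linarith)).comp hlog).eventually_ge_atTop 2
  have e2 : ∀ᶠ x : ℝ in atTop, Real.log x ^ (6 + ε) < x := by
    have h := (isLittleO_log_rpow_rpow_atTop (6 + ε) one_pos).bound (show (0 : ℝ) < 1 / 2 by norm_num)
    filter_upwards [h, eventually_gt_atTop 1] with x hx hx1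
    rw [Real.rpow_one, Real.norm_of_nonneg (by positivity [Real.log_pos hx1]),
      Real.norm_of_nonneg (by linarith)] at hx
    linarith
  have e3 : ∀ᶠ y : ℝ in atTop, y / 2 ≤ (y - 1) * Real.log 2 - Real.log (y + 2) := by
    have h := Real.isLittleO_log_id_atTop.bound (show (0 : ℝ) < 1 / 10 by norm_num)
    have h' := (tendsto_atTop_add_const_right atTop (2 : ℝ) tendsto_id).eventually h
    filter_upwards [h', eventually_gt_atTop 100] with y hy hy1
    simp only [id, Real.norm_eq_abs] at hy
    rw [abs_of_pos (show (0 : ℝ) < y + 2 by linarith)] at hy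
    have := (abs_le.mp hy).2
    nlinarith [Real.log_two_gt_d9]
  have e4 : ∀ᶠ x : ℝ in atTop, 2 * Real.log x ^ (-(0.2 * ε)) ≤ 1 / 4 := by
    have h := (tendsto_rpow_neg_atTop (show 0 < 0.2 * ε by positivity)).comp hlog
    have := h.eventually (eventually_le_nhds (show (0 : ℝ) < 1 / 8 by norm_num))
    filter_upwards [this] with x hx
    simp only [Function.comp] at hx
    linarith
  filter_upwards [eventually_gt_atTop 5, hlog.eventually_gt_atTop 0, e1, e2,
    Real.tendsto_sqrt_atTop.eventually e3, e4] with x h1 h2 h3 h4 h5 h6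
  exact ⟨h1, h2, h3, h4, h5, h6⟩

/-- Conditional binary result: if character sums over primes `q ≤ Q = (log p)^{6+ε}` are
small for all non-principal characters mod `p`, then every `λ` is a sum of two fractions
`m/x` with `m ∈ M`, `|M| = ⌊p^{1/2}⌋`, and `1 ≤ x ≤ ⌊p^{1/2}(log p)^{6+ε}⌋`. -/
theorem two_summands_conditional (ε : ℝ) (hε : 0 < ε) (hε' : ε < 0.1) :
    ∃ p₀ : ℕ, ∀ p : ℕ, p.Prime → p₀ < p →
      (∀ χ : DirichletCharacter ℂ p, χ ≠ 1 →
        ‖∑ q ∈ (Finset.range (⌊(Real.log p) ^ ((6 : ℝ) + ε)⌋₊ + 1)).filter Nat.Prime,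
            χ (q : ZMod p)‖
          ≤ (Nat.primeCounting ⌊(Real.log p) ^ ((6 : ℝ) + ε)⌋₊ : ℝ) *
              (Real.log p) ^ (-(1 + 0.1 * ε))) →
      ∀ M : Finset (ZMod p), (∀ m ∈ M, m ≠ 0) →
      M.card = ⌊(p : ℝ) ^ ((1 : ℝ) / 2)⌋₊ →
      ∀ H : ℕ, H = ⌊(p : ℝ) ^ ((1 : ℝ) / 2) * Real.log p ^ ((6 : ℝ) + ε)⌋₊ →
      ∀ lam : ℤ, ∃ m₁ ∈ M, ∃ m₂ ∈ M, ∃ x₁ x₂ : ℕ,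
        (1 ≤ x₁ ∧ x₁ ≤ H) ∧ (1 ≤ x₂ ∧ x₂ ≤ H) ∧
        m₁ * (x₁ : ZMod p)⁻¹ + m₂ * (x₂ : ZMod p)⁻¹ = (lam : ZMod p) := by
  classical
  obtain ⟨B, hB⟩ := Filter.eventually_atTop.mp (eventually_conditions ε hε)
  refine ⟨⌈B⌉₊, fun p hp hpB hchar M hM hMc H hH lam => ?_⟩
  have : Fact p.Prime := ⟨hp⟩
  obtain ⟨h5, hL0, hQ2, hQp, hpi, hsmall⟩ :=
    hB p ((Nat.le_ceil B).trans (by exact_mod_cast hpB.le))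
  set L := Real.log p with hL
  set Q := ⌊L ^ ((6 : ℝ) + ε)⌋₊ with hQ
  have hp0 : (0 : ℝ) < p := by linarith
  rw [← Real.sqrt_eq_rpow] at hMc hH
  have hN : ⌊√(p : ℝ)⌋₊ = Nat.sqrt p := Real.nat_floor_real_sqrt_eq_nat_sqrt
  rw [hN] at hMc
  set N := Nat.sqrt p with hNdef
  set P := (Finset.range (Q + 1)).filter Nat.Prime with hPdef
  set Y := (Finset.range (N + 1)).filter Nat.Prime with hYdef
  have hPcard : P.card = Nat.primeCounting Q := by
    rw [Nat.primeCounting, Nat.primeCounting', Nat.count_eq_card_filter_range]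
  have hYcard : Y.card = Nat.primeCounting N := by
    rw [Nat.primeCounting, Nat.primeCounting', Nat.count_eq_card_filter_range]
  have hP : ∀ q ∈ P, q.Prime ∧ q ≤ Q := by
    intro q hq
    rw [hPdef, Finset.mem_filter, Finset.mem_range] at hq
    exact ⟨hq.2, by omega⟩
  have hY : ∀ y ∈ Y, y.Prime ∧ y ≤ N := by
    intro q hq
    rw [hYdef, Finset.mem_filter, Finset.mem_range] at hq
    exact ⟨hq.2, by omega⟩
  have hQltp : Q < p := by
    rw [hQ, Nat.floor_lt (by positivity)]
    exact hQp
  have hNltp : N < p := Nat.sqrt_lt_self hp.one_lt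
  have hcast0 : ∀ a : ℕ, 0 < a → a < p → (a : ZMod p) ≠ 0 := by
    intro a ha hap h
    rw [ZMod.natCast_eq_zero_iff] at h
    exact absurd (Nat.le_of_dvd ha h) (by omega)
  have hPne : ∀ q ∈ P, (q : ZMod p) ≠ 0 := fun q hq =>
    hcast0 q (hP q hq).1.pos ((hP q hq).2.trans_lt hQltp)
  have hYne : ∀ q ∈ Y, (q : ZMod p) ≠ 0 := fun q hq =>
    hcast0 q (hY q hq).1.pos ((hY q hq).2.trans_lt hNltp)
  have hP0 : P.Nonempty := by
    refine ⟨2, ?_⟩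
    rw [hPdef, Finset.mem_filter, Finset.mem_range]
    have : 2 ≤ Q := Nat.le_floor (by exact_mod_cast hQ2)
    exact ⟨by omega, Nat.prime_two⟩
  -- the set of fractions `m / (q * y)`, all of which are admissible
  set S : Finset (ZMod p) := ((M ×ˢ Y) ×ˢ P).image fun x =>
    x.1.1 * ((x.2 * x.1.2 : ℕ) : ZMod p)⁻¹ with hS
  set Z : Finset (ZMod p) := (Finset.univ \ S).erase 0 with hZdef
  have hSH : ∀ s ∈ S, ∃ m ∈ M, ∃ x : ℕ, (1 ≤ x ∧ x ≤ H) ∧ s = m * (x : ZMod p)⁻¹ := by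
    intro s hs
    rw [hS, Finset.mem_image] at hs
    obtain ⟨⟨⟨m, y⟩, q⟩, hx, rfl⟩ := hs
    simp only [Finset.mem_product] at hx
    refine ⟨m, hx.1.1, q * y, ⟨?_, ?_⟩, rfl⟩
    · exact Nat.mul_pos (hP q hx.2).1.pos (hY y hx.1.2).1.pos
    · rw [hH]
      refine Nat.le_floor ?_
      have h1 : (q : ℝ) ≤ L ^ ((6 : ℝ) + ε) :=
        le_trans (by exact_mod_cast (hP q hx.2).2) (Nat.floor_le (by positivity))
      have h2 : (y : ℝ) ≤ √(p : ℝ) :=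
        le_trans (by exact_mod_cast (hY y hx.1.2).2) (Real.nat_sqrt_le_real_sqrt)
      push_cast
      rw [mul_comm]
      gcongr
  have hZle : (Z.card : ℝ) ≤ p / 4 := by
    have hmain := card_mul_sq_le (p := p) (M ×ˢ Y)
      (fun x : ZMod p × ℕ => (x.2 : ZMod p) * x.1⁻¹) ?_ P hPne hP0 Z
      (fun z hz => Finset.ne_of_mem_erase hz) (L ^ (-(1 + 0.1 * ε))) (by positivity) ?_ ?_
    · have hE := energy_le M hM Y hY
      have hEr : ((((M ×ˢ Y) ×ˢ (M ×ˢ Y)).filter fun x : (ZMod p × ℕ) × (ZMod p × ℕ) =>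
          (x.1.2 : ZMod p) * x.1.1⁻¹ = (x.2.2 : ZMod p) * x.2.1⁻¹).card : ℝ)
          ≤ (N : ℝ) * Y.card + N * N := by
        rw [hMc] at hE
        exact_mod_cast hE
      have hYN : (Y.card : ℝ) ≤ N := by
        have h : Y.card ≤ (Finset.Icc 1 N).card := Finset.card_le_card fun y hy =>
          Finset.mem_Icc.mpr ⟨(hY y hy).1.one_le, (hY y hy).2⟩
        rw [Nat.card_Icc, Nat.add_sub_cancel] at h
        exact_mod_cast h
      have hN0 : (0 : ℝ) < N := by exact_mod_cast Nat.sqrt_pos.mpr hp.pos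
      -- Chebyshev's lower bound for the number of primes up to `√p`
      have hYlow : √(p : ℝ) ≤ Y.card * L := by
        have h1 : (1 : ℝ) < √(p : ℝ) := by
          rw [Real.lt_sqrt (by norm_num)]
          linarith
        have h2 := Chebyshev.pi_ge' h1
        rw [hN, ← hYcard, Real.log_sqrt hp0.le, div_le_iff₀ (by positivity)] at h2
        linarith
      have hYsq : (p : ℝ) ≤ (Y.card : ℝ) ^ 2 * L ^ 2 := by
        calc (p : ℝ) = √(p : ℝ) ^ 2 := (Real.sq_sqrt hp0.le).symm
          _ ≤ (Y.card * L) ^ 2 := by gcongr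
          _ = _ := by ring
      have hδ : (L ^ (-(1 + 0.1 * ε))) ^ 2 * L ^ 2 = L ^ (-(0.2 * ε)) := by
        rw [← Real.rpow_natCast, ← Real.rpow_mul hL0.le, ← Real.rpow_natCast L 2,
          ← Real.rpow_add hL0]
        congr 1
        push_cast
        ring
      set δ := L ^ (-(1 + 0.1 * ε)) with hδdef
      rw [Finset.card_product, hMc] at hmain
      push_cast at hmain
      have h3 : (Z.card : ℝ) * (Y.card : ℝ) ^ 2 ≤ 2 * δ ^ 2 * (p : ℝ) ^ 2 := by
        have hNN : (0 : ℝ) < (N : ℝ) ^ 2 := by positivity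
        refine le_of_mul_le_mul_left ?_ hNN
        calc (N : ℝ) ^ 2 * (Z.card * (Y.card : ℝ) ^ 2) = Z.card * ((N : ℝ) * Y.card) ^ 2 := by ring
          _ ≤ _ := hmain
          _ ≤ δ ^ 2 * (p : ℝ) ^ 2 * ((N : ℝ) * Y.card + N * N) := by gcongr
          _ ≤ δ ^ 2 * (p : ℝ) ^ 2 * ((N : ℝ) * N + N * N) := by gcongr
          _ = _ := by ring
      have h4 : (p : ℝ) * Z.card ≤ p * (p / 4) := by
        calc (p : ℝ) * Z.card ≤ ((Y.card : ℝ) ^ 2 * L ^ 2) * Z.card := by gcongr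
          _ = (Z.card * (Y.card : ℝ) ^ 2) * L ^ 2 := by ring
          _ ≤ (2 * δ ^ 2 * (p : ℝ) ^ 2) * L ^ 2 := by gcongr
          _ = (p : ℝ) ^ 2 * (2 * (δ ^ 2 * L ^ 2)) := by ring
          _ = (p : ℝ) ^ 2 * (2 * L ^ (-(0.2 * ε))) := by rw [hδ]
          _ ≤ (p : ℝ) ^ 2 * (1 / 4) := by gcongr
          _ = _ := by ring
      exact le_of_mul_le_mul_left h4 hp0
    · rintro ⟨m, y⟩ hx
      rw [Finset.mem_product] at hx
      exact mul_ne_zero (hYne y hx.2) (inv_ne_zero (hM m hx.1))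
    · intro χ hχ
      rw [hPcard]
      exact hchar χ hχ
    · rintro z hz q hq ⟨m, y⟩ hx h
      rw [Finset.mem_product] at hx
      have hzS : z ∉ S := (Finset.mem_sdiff.mp (Finset.mem_of_mem_erase hz)).2
      refine hzS ?_
      rw [hS, Finset.mem_image]
      refine ⟨((m, y), q), by simp [hx.1, hx.2, hq], ?_⟩
      have := hPne q hq
      have := hYne y hx.2
      have := hM m hx.1
      simp only at h
      push_cast
      field_simp
      field_simp at h
      linear_combination -h
  have hcard : p ≤ S.card + Z.card + 1 := by
    have h1 : (Finset.univ \ S).card = p - S.card := by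
      rw [Finset.card_sdiff_of_subset (Finset.subset_univ _), Finset.card_univ, ZMod.card]
    have h2 := Finset.pred_card_le_card_erase (s := Finset.univ \ S) (a := (0 : ZMod p))
    rw [← hZdef] at h2
    omega
  have hS2 : p < 2 * S.card := by
    have h1 : (p : ℝ) ≤ S.card + Z.card + 1 := by exact_mod_cast hcard
    have h2 : (p : ℝ) < 2 * S.card := by linarith
    exact_mod_cast h2
  -- more than half of the residues lie in `S`, so `S` meets `lam - S`
  obtain ⟨s, hs⟩ : (S ∩ S.image fun s => (lam : ZMod p) - s).Nonempty := by
    rw [← Finset.card_pos]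
    have h1 := Finset.card_union_add_card_inter S (S.image fun s => (lam : ZMod p) - s)
    rw [Finset.card_image_of_injective S sub_right_injective] at h1
    have h2 := Finset.card_le_univ (S ∪ S.image fun s => (lam : ZMod p) - s)
    rw [ZMod.card] at h2
    omega
  obtain ⟨hs1, hs2⟩ := Finset.mem_inter.mp hs
  obtain ⟨t, ht, hst⟩ := Finset.mem_image.mp hs2
  obtain ⟨m₁, hm₁, x₁, hx₁, e₁⟩ := hSH s hs1
  obtain ⟨m₂, hm₂, x₂, hx₂, e₂⟩ := hSH t ht
  refine ⟨m₁, hm₁, m₂, hm₂, x₁, x₂, hx₁, hx₂, ?_⟩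
  rw [← e₁, ← e₂, ← hst]
  ring
end

section
/- Let p be a prime and let I and J be subsets of F_p^* each consisting of ⌊√(8p)⌋ consecutive integers modulo p. Then the set W = { m·x^{-1} mod p : m ∈ I, x ∈ J } satisfies |W| > p/2. -/
/-!
Write `N = ⌊√(8p)⌋` and `M = ⌈N/2⌉`, so that `2M - 1 ≤ N`, while `N + 1 > √(8p)` gives
`2p ≤ M² + M`. With `A` the residues of `{0, …, M - 1}`, both `I` and `J` contain translates
`k + A + A`, `l + A + A`. For a slope `s` put `D_s = {a - s b : a, b ∈ A}`.

If `s ∉ W`, then no `m ∈ I`, `x ∈ J` satisfy `m = s x`. Expanding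
`k + a + a' ≠ s (l + b + b')` shows that `D_s` is disjoint from a reflected translate of itself, so
`2 |D_s| ≤ p` (`two_mul_card_le`). The collision count
`E(s) = #{(a, b, a', b') : a - s b = a' - s b'}` satisfies `M⁴ ≤ |D_s| E(s)` by Cauchy–Schwarz
(`card_sq_le_image_mul_collisions`), hence `p E(s) ≥ M⁴` always and `p E(s) ≥ 2 M⁴` for `s ∉ W`.

On the other hand, two pairs with `b ≠ b'` collide for exactly one slope, so
`∑ E(s) ≤ p M² + M⁴ - M³` (`sum_collisions_le`). If `|W| ≤ p/2`, at least half of the slopes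
lie outside `W`, and the lower bounds sum to `∑ E(s) ≥ (3/2) M⁴`. Together these give
`M² + 2M ≤ 2p ≤ M² + M`, which is absurd.
-/

/-- The number of ordered pairs of elements of `s` (diagonal included) identified by `f`. -/
def collisions {α β : Type*} [DecidableEq β] (s : Finset α) (f : α → β) : ℕ :=
  ((s ×ˢ s).filter (fun z => f z.1 = f z.2)).card

/-- Cauchy–Schwarz applied to the fibre sizes of `f` on `s`. -/
lemma card_sq_le_image_mul_collisions {α β : Type*} [DecidableEq β]
    (s : Finset α) (f : α → β) :
    s.card ^ 2 ≤ (s.image f).card * collisions s f := by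
  have h1 : s.card = ∑ c ∈ s.image f, (s.filter (fun x => f x = c)).card :=
    Finset.card_eq_sum_card_fiberwise (fun x hx => Finset.mem_image_of_mem f hx)
  have h2 : collisions s f = ∑ c ∈ s.image f, (s.filter (fun x => f x = c)).card ^ 2 := by
    unfold collisions
    rw [Finset.card_eq_sum_card_fiberwise (f := fun z => f z.1) (t := s.image f)]
    · refine Finset.sum_congr rfl fun c _ => ?_
      rw [sq, ← Finset.card_product]
      congr 1
      ext z
      simp only [Finset.mem_filter, Finset.mem_product]
      constructor
      · rintro ⟨⟨⟨h, h'⟩, e⟩, e'⟩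
        exact ⟨⟨h, e'⟩, h', e ▸ e'⟩
      · rintro ⟨⟨h, e⟩, h', e'⟩
        exact ⟨⟨⟨h, h'⟩, e.trans e'.symm⟩, e⟩
    · intro z hz
      simp only [Finset.coe_filter, Finset.mem_product, Set.mem_setOf_eq] at hz
      exact Finset.mem_image_of_mem f hz.1.1
  rw [h2]
  conv_lhs => rw [h1]
  exact sq_sum_le_card_mul_sum_sq

/-- Counting collisions of `(a, b) ↦ a - s b` over all slopes `s`: pairs with different second
coordinates collide for at most one `s`, distinct pairs with equal second coordinates for none,
and equal pairs for all `s`. -/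
lemma sum_collisions_le {F : Type*} [Field F] [Fintype F] [DecidableEq F] (A : Finset F) :
    (∑ s : F, collisions (A ×ˢ A) (fun z : F × F => z.1 - s * z.2)) + A.card ^ 3
      ≤ Fintype.card F * A.card ^ 2 + A.card ^ 4 := by
  have key : ∀ x y : F × F,
      (Finset.univ.filter (fun s : F => x.1 - s * x.2 = y.1 - s * y.2)).card
        + (if x.2 = y.2 then 1 else 0) ≤ (if x = y then Fintype.card F else 0) + 1 := by
    rintro ⟨a, b⟩ ⟨a', b'⟩
    by_cases hb : b = b'
    · subst hb
      by_cases ha : a = a'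
      · simp [ha]
      · simp [ha]
    · have : (Finset.univ.filter (fun s : F => a - s * b = a' - s * b')).card ≤ 1 := by
        rw [Finset.card_le_one]
        intro s hs t ht
        simp only [Finset.mem_filter, Finset.mem_univ, true_and] at hs ht
        have : (s - t) * (b - b') = 0 := by linear_combination ht - hs
        rcases mul_eq_zero.1 this with h | h
        · exact sub_eq_zero.1 h
        · exact absurd (sub_eq_zero.1 h) hb
      simpa [hb] using this
  have swap : ∑ s : F, collisions (A ×ˢ A) (fun z : F × F => z.1 - s * z.2)
      = ∑ x ∈ A ×ˢ A, ∑ y ∈ A ×ˢ A,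
        (Finset.univ.filter (fun s : F => x.1 - s * x.2 = y.1 - s * y.2)).card := by
    simp only [collisions, Finset.card_filter]
    rw [Finset.sum_comm, Finset.sum_product]
  have h3 : ∑ x ∈ A ×ˢ A, ∑ y ∈ A ×ˢ A, (if x.2 = y.2 then 1 else 0) = A.card ^ 3 := by
    have : ∀ x ∈ A ×ˢ A, ∑ y ∈ A ×ˢ A, (if x.2 = y.2 then 1 else 0) = A.card := by
      intro x hx
      rw [Finset.sum_product]
      simp [(Finset.mem_product.1 hx).2]
    rw [Finset.sum_congr rfl this]
    simp only [Finset.sum_const, Finset.card_product, smul_eq_mul]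
    ring
  have h4 : ∑ x ∈ A ×ˢ A, ∑ y ∈ A ×ˢ A, ((if x = y then Fintype.card F else 0) + 1)
      = Fintype.card F * A.card ^ 2 + A.card ^ 4 := by
    have : ∀ x ∈ A ×ˢ A, ∑ y ∈ A ×ˢ A, ((if x = y then Fintype.card F else 0) + 1)
        = Fintype.card F + A.card ^ 2 := by
      intro x hx
      rw [Finset.sum_add_distrib, Finset.sum_ite_eq, if_pos hx]
      simp [sq]
    rw [Finset.sum_congr rfl this]
    simp only [Finset.sum_const, Finset.card_product, smul_eq_mul]
    ring
  rw [swap, ← h3, ← h4, ← Finset.sum_add_distrib]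
  refine Finset.sum_le_sum fun x _ => ?_
  rw [← Finset.sum_add_distrib]
  exact Finset.sum_le_sum fun y _ => key x y

/-- If `k + a + a' = s (l + b + b')` has no solution in `A`, then `{a - s b}` misses its image
under `d ↦ s l - k - d`, so it fills at most half of the field. -/
lemma two_mul_card_le {F : Type*} [Field F] [Fintype F] [DecidableEq F] (A : Finset F)
    (s k l : F)
    (h : ∀ a ∈ A, ∀ a' ∈ A, ∀ b ∈ A, ∀ b' ∈ A, k + a + a' ≠ s * (l + b + b')) :
    2 * ((A ×ˢ A).image (fun z : F × F => z.1 - s * z.2)).card ≤ Fintype.card F := by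
  set D := (A ×ˢ A).image (fun z : F × F => z.1 - s * z.2) with hD
  have hinj : Function.Injective (fun d : F => s * l - k - d) := sub_right_injective
  have hdisj : Disjoint D (D.image (fun d : F => s * l - k - d)) := by
    rw [Finset.disjoint_left]
    intro d hd hd'
    simp only [hD, Finset.mem_image, Finset.mem_product] at hd hd'
    obtain ⟨⟨a, b⟩, ⟨ha, hb⟩, rfl⟩ := hd
    obtain ⟨_, ⟨⟨a', b'⟩, ⟨ha', hb'⟩, rfl⟩, e⟩ := hd'
    exact h a ha a' ha' b hb b' hb' (by linear_combination -e)
  have := Finset.card_le_univ (D ∪ D.image (fun d : F => s * l - k - d))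
  rw [Finset.card_union_of_disjoint hdisj, Finset.card_image_of_injective _ hinj] at this
  omega

/-- The lower bounds for collision counts, summed over all slopes; `W` is any set of slopes
outside which `D_s` fills at most half of the field. -/
lemma card_gt_half {F : Type*} [Field F] [Fintype F] [DecidableEq F] (A W : Finset F)
    (hA : 0 < A.card) (hF : 2 * Fintype.card F ≤ A.card ^ 2 + A.card)
    (h : ∀ s ∉ W, 2 * ((A ×ˢ A).image (fun z : F × F => z.1 - s * z.2)).card
      ≤ Fintype.card F) :
    Fintype.card F < 2 * W.card := by
  by_contra! hW
  set p := Fintype.card F with hp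
  set M := A.card with hM
  set E : F → ℕ := fun s => collisions (A ×ˢ A) (fun z : F × F => z.1 - s * z.2) with hE
  have hp0 : 0 < p := Fintype.card_pos
  have cs : ∀ s, M ^ 4 ≤ ((A ×ˢ A).image (fun z : F × F => z.1 - s * z.2)).card * E s := by
    intro s
    have := card_sq_le_image_mul_collisions (A ×ˢ A) (fun z : F × F => z.1 - s * z.2)
    rw [Finset.card_product] at this
    calc M ^ 4 = (M * M) ^ 2 := by ring
      _ ≤ _ := this
  have lower : ∀ s, M ^ 4 + (if s ∈ Wᶜ then M ^ 4 else 0) ≤ p * E s := by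
    intro s
    by_cases hs : s ∈ W
    · simp only [Finset.mem_compl, hs, not_true_eq_false, if_false, add_zero]
      exact (cs s).trans (Nat.mul_le_mul_right _ (Finset.card_le_univ _))
    · simp only [Finset.mem_compl, hs, not_false_eq_true, if_true]
      have h1 := Nat.mul_le_mul_right (E s) (h s hs)
      have h2 := cs s
      linarith
  have hsum : p * M ^ 4 + (Wᶜ).card * M ^ 4 ≤ p * ∑ s, E s := by
    rw [Finset.mul_sum]
    refine le_trans (le_of_eq ?_) (Finset.sum_le_sum fun s _ => lower s)
    rw [Finset.sum_add_distrib, Finset.sum_ite_mem]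
    simp [hp]
  have upper : ∑ s, E s + M ^ 3 ≤ p * M ^ 2 + M ^ 4 := sum_collisions_le A
  have hc : p ≤ 2 * (Wᶜ).card := by
    rw [Finset.card_compl]; omega
  have h1 : p * (3 * M ^ 4) ≤ p * (2 * ∑ s, E s) := by
    have := Nat.mul_le_mul_right (M ^ 4) hc
    linarith
  have h2 := Nat.le_of_mul_le_mul_left h1 hp0
  have h3 : M ^ 2 * (M ^ 2 + 2 * M) ≤ M ^ 2 * (2 * p) := by
    have e : M ^ 2 * (M ^ 2 + 2 * M) = M ^ 4 + 2 * M ^ 3 := by ring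
    rw [e]; linarith
  have h4 := Nat.le_of_mul_le_mul_left h3 (by positivity)
  omega

/-- If `I, J ⊆ F_p^*` are intervals of `⌊√(8p)⌋` consecutive residues, then the set
`W = {m/x : m ∈ I, x ∈ J}` has more than `p/2` elements. -/
theorem ratio_set_large (p : ℕ) (hp : p.Prime) (I J : Finset (ZMod p))
    (hI : ∃ K : ℤ, I = (Finset.range ⌊Real.sqrt (8 * p)⌋₊).image
        (fun i : ℕ => ((K + 1 + i : ℤ) : ZMod p)))
    (hI0 : (0 : ZMod p) ∉ I)
    (hJ : ∃ K : ℤ, J = (Finset.range ⌊Real.sqrt (8 * p)⌋₊).image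
        (fun i : ℕ => ((K + 1 + i : ℤ) : ZMod p)))
    (hJ0 : (0 : ZMod p) ∉ J) :
    ((Finset.image₂ (fun m x : ZMod p => m * x⁻¹) I J).card : ℝ) > (p : ℝ) / 2 := by
  haveI : Fact p.Prime := ⟨hp⟩
  obtain ⟨K, hK⟩ := hI
  obtain ⟨L, hL⟩ := hJ
  set N := ⌊Real.sqrt (8 * p)⌋₊ with hN
  have hN2 : 8 * p < (N + 1) ^ 2 := by
    have h1 : Real.sqrt (8 * p) < N + 1 := Nat.lt_floor_add_one _
    have h2 := (Real.sqrt_lt' (by positivity)).1 h1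
    exact_mod_cast h2
  -- An interval of length at least `p` would contain `0`.
  have hNp : N < p := by
    by_contra! hle
    apply hI0
    rw [hK, Finset.mem_image]
    refine ⟨(-((K + 1 : ℤ) : ZMod p)).val, ?_, ?_⟩
    · exact Finset.mem_range.2 ((ZMod.val_lt _).trans_le hle)
    · push_cast
      rw [ZMod.natCast_zmod_val]
      ring
  obtain ⟨M, hM1, hM2⟩ : ∃ M, 2 * M ≤ N + 1 ∧ N ≤ 2 * M := ⟨(N + 1) / 2, by omega, by omega⟩
  have hp2 := hp.two_le
  have hM0 : 0 < M := by
    by_contra! h0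
    have : N = 0 := by omega
    rw [this] at hN2
    omega
  have hpM : 2 * p ≤ M ^ 2 + M := by
    have h1 : (N + 1) ^ 2 ≤ (2 * M + 1) ^ 2 := Nat.pow_le_pow_left (by omega) 2
    have h2 : (2 * M + 1) ^ 2 = 4 * (M ^ 2 + M) + 1 := by ring
    omega
  set A : Finset (ZMod p) := (Finset.range M).image (fun i : ℕ => (i : ZMod p)) with hA
  have hAcard : A.card = M := by
    rw [hA, Finset.card_image_of_injOn, Finset.card_range]
    intro i hi j hj hij
    simp only [Finset.coe_range, Set.mem_Iio] at hi hj
    have := (ZMod.natCast_eq_natCast_iff' i j p).1 hij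
    rwa [Nat.mod_eq_of_lt (by omega), Nat.mod_eq_of_lt (by omega)] at this
  have hsub : ∀ (T : ℤ) (a : ZMod p), a ∈ A → ∀ a' ∈ A, ((T + 1 : ℤ) : ZMod p) + a + a' ∈
      (Finset.range N).image (fun i : ℕ => ((T + 1 + i : ℤ) : ZMod p)) := by
    intro T a ha a' ha'
    simp only [hA, Finset.mem_image, Finset.mem_range] at ha ha'
    obtain ⟨i, hi, rfl⟩ := ha
    obtain ⟨j, hj, rfl⟩ := ha'
    refine Finset.mem_image.2 ⟨i + j, Finset.mem_range.2 (by omega), ?_⟩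
    push_cast
    ring
  have main := card_gt_half A (Finset.image₂ (fun m x : ZMod p => m * x⁻¹) I J)
    (by omega) (by rw [hAcard, ZMod.card]; exact hpM) (by
      intro s hs
      refine two_mul_card_le A s ((K + 1 : ℤ) : ZMod p) ((L + 1 : ℤ) : ZMod p) ?_
      intro a ha a' ha' b hb b' hb' e
      have hm := hsub K a ha a' ha'
      have hx := hsub L b hb b' hb'
      rw [← hK] at hm
      rw [← hL] at hx
      have hx0 : ((L + 1 : ℤ) : ZMod p) + b + b' ≠ 0 := fun h0 => hJ0 (h0 ▸ hx)
      refine hs (Finset.mem_image₂.2 ⟨_, hm, _, hx, ?_⟩)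
      rw [e, mul_assoc, mul_inv_cancel₀ hx0, mul_one])
  rw [ZMod.card] at main
  have main' : (p : ℝ) < 2 * ((Finset.image₂ (fun m x : ZMod p => m * x⁻¹) I J).card : ℝ) := by
    exact_mod_cast main
  linarith
end
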